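/- For all d, m ∈ ℕ with d ≥ m, there exists a constant C(m, d), depending only on m and d, with the following property: for any functions ρ₁, …, ρ_n : ℝ → ℝ of bounded variation with ‖ρ_j‖_{L¹(ℝ)} = 1 for all j ∈ {1, …, n}, for any non-constant polynomial f ∈ 𝒫_{d,m}(ℝⁿ), for any t > 0, and for any φ ∈ C_b^∞(ℝ) with ‖φ'‖_∞ ≤ 1 and ‖φ‖_∞ ≤ t, one has ∫_{ℝⁿ} φ'(f(x)) ρ₁(x₁)⋯ρ_n(x_n) dx ≤ C(m, d) · (1 + max_{1≤j≤n} ‖D₁ρ_j‖_{TV})^{d/m} · [f]_∞^{−1/m} · t^{1/m} · (|ln([f]_∞^{−1} t)|^{d−m} + 1). -/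

import Mathlib

/-!
The estimate can be normalized by scaling: the dilation `x ↦ x / K` with
`K = 1 + max ‖D₁ρ_j‖_{TV}` makes the variation of every density at most one and costs at most `K^d` in the
leading coefficients (`K ≥ 1`), and `φ` is replaced by `φ(t ·) / t`, `f` by `f / t`, so that `t = 1`.
Integrals are then measured by the profile `decay`, which is `min(1, |a|^{-1/m})` times a power of
`B + log⁺|a| / m`, and it has to be shown that the oscillatory integral is at most a constant times the
profile with exponent `k - m`, evaluated at a leading coefficient; here `k` is the degree of `f`.

By `exists_windows`, a density of bounded variation may be replaced, up to a constant, by an average of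
uniform densities on intervals of length two, so that every one-variable question concerns `[-1, 1]`.
Two facts about a polynomial `p` of degree at most `m` on this interval are needed.

* `van_der_corput`: `∫ φ'(p)` is `O(min(1, |a|^{-1/m}))` for every non-constant coefficient `a` of `p`.
  This is an integration by parts against `p' / (p'² + δ²)`; the variation of `δ p' / (p'² + δ²)` is bounded
  by the number of roots (`lintegral_variation`), and the set where `p'` is small is controlled by the
  distance to the roots (`exists_centers`).
* The average of the profile of `p` is at most a constant times the profile at any coefficient of `p`, with
  one more logarithm when the degree is `m` (`lintegral_decay_log`), and none when it is smaller
  (`exists_lintegral_decay`).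

In many variables fix a monomial `u` of degree `k` that carries a largest leading coefficient, freeze the
variables that do not occur in it, and integrate the others one after the other. Integrating out `x_j`
replaces `f` by the coefficient of `x_j^{u_j}`, of degree at most `k - u_j`, whose leading coefficient at the
rest of `u` is unchanged. The first integration is the van der Corput estimate, and no logarithm arises; after
it, only polynomials of degree `e ≥ m` cost a logarithm, and `e ≤ k - 1` decreases strictly. This gives at
most `k - m` logarithms (`exists_lintegral_decay_pi`, `exists_oscillatory_pi`). Finally `decay_rescale_le`
undoes the normalization.
-/

open MeasureTheory

noncomputable section

/-- The class `C_b^∞(ℝ)` of bounded smooth functions on `ℝ`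
with bounded derivatives of every order. -/
def CbSmooth (φ : ℝ → ℝ) : Prop :=
  ContDiff ℝ (⊤ : ℕ∞) φ ∧ ∀ k : ℕ, ∃ M : ℝ, ∀ t : ℝ, |iteratedDeriv k φ t| ≤ M

/-- The total variation norm of a (bounded, signed) Borel measure on `ℝ`. -/
def sTV (s : SignedMeasure ℝ) : ℝ := (s.totalVariation Set.univ).toReal

/-- The integral of a function against a signed measure on `ℝ`. -/
def sInt (s : SignedMeasure ℝ) (φ : ℝ → ℝ) : ℝ :=
  (∫ x, φ x ∂s.toJordanDecomposition.posPart) -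
    ∫ x, φ x ∂s.toJordanDecomposition.negPart

/-- `[f]_∞`: the largest absolute value of a coefficient of the leading
(top-degree) part of `f`. -/
def leadingSup {n : ℕ} (f : MvPolynomial (Fin n) ℝ) : ℝ :=
  sSup {y : ℝ | ∃ u ∈ f.support, (u.sum fun _ e => e) = f.totalDegree ∧ y = |f.coeff u|}

/-! ### Polynomials bounded below by the distance to their roots -/

open Polynomial in
lemma norm_coeff_prod_le (s : Multiset ℂ) (j : ℕ) :
    ‖((s.map fun z => X - C z).prod).coeff j‖ ≤ (s.map fun z => 1 + ‖z‖).prod := by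
  induction s using Multiset.induction_on generalizing j with
  | empty =>
    simp only [Multiset.map_zero, Multiset.prod_zero, Polynomial.coeff_one]
    split_ifs <;> simp
  | cons z s ih =>
    simp only [Multiset.map_cons, Multiset.prod_cons, sub_mul, Polynomial.coeff_sub,
      Polynomial.coeff_C_mul]
    refine (norm_sub_le _ _).trans ?_
    rw [add_mul, one_mul, norm_mul]
    have h0 : (0 : ℝ) ≤ (s.map fun z => 1 + ‖z‖).prod := (norm_nonneg _).trans (ih 0)
    refine add_le_add ?_ (mul_le_mul_of_nonneg_left (ih j) (norm_nonneg _))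
    cases j with
    | zero => simpa using h0
    | succ j => rw [Polynomial.coeff_X_mul]; exact ih j

/-- If the real part of every root is at distance at least `y` from `x`, the polynomial at `x` is bounded
below through `∏ (1 + ‖z‖)`, which dominates all its coefficients. -/
lemma prod_dist_ge (s : Multiset ℂ) {x y : ℝ} (hx : |x| ≤ 1) (hy0 : 0 ≤ y) (hy1 : y ≤ 1)
    (hy : ∀ z ∈ s, y ≤ |x - z.re|) :
    (s.map fun z => 1 + ‖z‖).prod * y ^ s.card ≤
      3 ^ s.card * (s.map fun z => ‖(x : ℂ) - z‖).prod := by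
  induction s using Multiset.induction_on with
  | empty => simp
  | cons z s ih =>
    simp only [Multiset.map_cons, Multiset.prod_cons, Multiset.card_cons, pow_succ]
    have ih' := ih fun w hw => hy w (Multiset.mem_cons_of_mem hw)
    have hz := hy z (Multiset.mem_cons_self z s)
    have key : (1 + ‖z‖) * y ≤ 3 * ‖(x : ℂ) - z‖ := by
      have h1 : |x - z.re| ≤ ‖(x : ℂ) - z‖ := by
        simpa using Complex.abs_re_le_norm ((x : ℂ) - z)
      have h2 : ‖z‖ - 1 ≤ ‖(x : ℂ) - z‖ := by
        have := norm_sub_norm_le z (x : ℂ)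
        rw [norm_sub_rev] at this
        simp only [Complex.norm_real, Real.norm_eq_abs] at this
        linarith
      have := norm_nonneg z
      -- near roots are controlled through their real part, far roots through their modulus
      rcases le_total ‖z‖ 2 with h | h
      · nlinarith
      · nlinarith
    have hp : (0 : ℝ) ≤ (s.map fun z => ‖(x : ℂ) - z‖).prod :=
      Multiset.prod_nonneg (by simp only [Multiset.mem_map]; rintro _ ⟨w, -, rfl⟩; positivity)
    have hq : (0 : ℝ) ≤ (s.map fun z => 1 + ‖z‖).prod := (norm_nonneg _).trans (norm_coeff_prod_le s 0)
    calc _ = ((1 + ‖z‖) * y) * ((s.map fun z => 1 + ‖z‖).prod * y ^ s.card) := by ring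
      _ ≤ (3 * ‖(x : ℂ) - z‖) * (3 ^ s.card * (s.map fun z => ‖(x : ℂ) - z‖).prod) := by gcongr
      _ = _ := by ring

open Polynomial in
/-- On `[-1, 1]` a real polynomial of degree at most `D` is bounded below by each of its coefficients
times the `D`-th power of the (truncated) distance to a finite set of centers, the real parts of its
complex roots. The extra center `5` only serves to make the set non-empty. -/
lemma exists_centers (p : ℝ[X]) {D : ℕ} (hD : p.natDegree ≤ D) :
    ∃ R : Finset ℝ, R.card ≤ D + 1 ∧ ∀ x : ℝ, |x| ≤ 1 → ∃ r ∈ R, ∀ j,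
      |p.coeff j| * min 1 |x - r| ^ D ≤ 3 ^ D * |p.eval x| := by
  rcases eq_or_ne p 0 with rfl | hp
  · exact ⟨{5}, by simp, fun x _ => ⟨5, by simp⟩⟩
  set P : ℂ[X] := p.map (algebraMap ℝ ℂ) with hP
  have hs : P.Splits := IsAlgClosed.splits P
  have hcard : P.roots.card = p.natDegree := by
    rw [← hs.natDegree_eq_card_roots, hP, natDegree_map]
  refine ⟨insert 5 (P.roots.toFinset.image Complex.re), ?_, fun x hx => ?_⟩
  · refine (Finset.card_insert_le _ _).trans ?_
    have := Finset.card_image_le (s := P.roots.toFinset) (f := Complex.re)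
    have := Multiset.toFinset_card_le P.roots
    omega
  obtain ⟨r, hr, hmin⟩ := Finset.exists_min_image (insert 5 (P.roots.toFinset.image Complex.re))
    (fun r => min 1 |x - r|) ⟨5, by simp⟩
  refine ⟨r, hr, fun j => ?_⟩
  set y := min 1 |x - r| with hy
  have hy0 : 0 ≤ y := by positivity
  have hy1 : y ≤ 1 := min_le_left _ _
  have hyz : ∀ z ∈ P.roots, y ≤ |x - z.re| := fun z hz =>
    (hmin z.re (by simp only [Finset.mem_insert, Finset.mem_image, Multiset.mem_toFinset]
                   exact Or.inr ⟨z, hz, rfl⟩)).trans (min_le_right _ _)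
  have h1 := prod_dist_ge P.roots hx hy0 hy1 hyz
  have h2 := norm_coeff_prod_le P.roots j
  have hprod := hs.eq_prod_roots
  have e1 : |p.coeff j| = ‖P.leadingCoeff‖ * ‖((P.roots.map fun z => X - C z).prod).coeff j‖ := by
    rw [← norm_mul, ← coeff_C_mul, ← hprod, hP, coeff_map]
    simp
  have e2 : |p.eval x| = ‖P.leadingCoeff‖ * (P.roots.map fun z => ‖(x : ℂ) - z‖).prod := by
    have h3 : |p.eval x| = ‖P.eval (x : ℂ)‖ := by
      have : P.eval (x : ℂ) = ((p.eval x : ℝ) : ℂ) := by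
        rw [hP]; exact eval_map_apply (algebraMap ℝ ℂ) x
      rw [this, Complex.norm_real, Real.norm_eq_abs]
    have h4 : P.eval (x : ℂ) = P.leadingCoeff * (P.roots.map fun z => (x : ℂ) - z).prod := by
      conv_lhs => rw [hprod]
      rw [eval_mul, eval_C, eval_multiset_prod, Multiset.map_map]
      simp
    rw [h3, h4, norm_mul]
    congr 1
    have := map_multiset_prod (normHom : ℂ →*₀ ℝ) (P.roots.map fun z => (x : ℂ) - z)
    rw [Multiset.map_map] at this
    exact this
  have hL := norm_nonneg P.leadingCoeff
  rw [hcard] at h1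
  obtain ⟨e, rfl⟩ := Nat.exists_eq_add_of_le hD
  have hm : |p.coeff j| * y ^ p.natDegree ≤ 3 ^ p.natDegree * |p.eval x| := by
    rw [e1, e2]
    calc _ ≤ ‖P.leadingCoeff‖ * (P.roots.map fun z => 1 + ‖z‖).prod * y ^ p.natDegree := by gcongr
      _ = ‖P.leadingCoeff‖ * ((P.roots.map fun z => 1 + ‖z‖).prod * y ^ p.natDegree) := by ring
      _ ≤ ‖P.leadingCoeff‖ * (3 ^ p.natDegree * _) := by gcongr
      _ = _ := by ring
  calc _ = (|p.coeff j| * y ^ p.natDegree) * y ^ e := by ring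
    _ ≤ (3 ^ p.natDegree * |p.eval x|) * 1 := by gcongr; exact pow_le_one₀ hy0 hy1
    _ ≤ (3 ^ p.natDegree * |p.eval x|) * 3 ^ e := by gcongr; exact one_le_pow₀ (by norm_num)
    _ = _ := by ring

/-! ### One-variable integrals -/

lemma lintegral_cauchy (a : ℝ) {s : ℝ} (hs : 0 < s) :
    ∫⁻ x : ℝ, ENNReal.ofReal (s / ((x - a) ^ 2 + s ^ 2)) = ENNReal.ofReal Real.pi := by
  have e : ∀ x : ℝ, s / ((x - a) ^ 2 + s ^ 2) = s⁻¹ * (1 + ((x - a) / s) ^ 2)⁻¹ := by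
    intro x; field_simp; ring
  simp_rw [e]
  rw [lintegral_sub_right_eq_self (fun x => ENNReal.ofReal (s⁻¹ * (1 + (x / s) ^ 2)⁻¹)) a,
    ← ofReal_integral_eq_lintegral_ofReal]
  · rw [integral_const_mul, Measure.integral_comp_div (fun x => (1 + x ^ 2)⁻¹) s,
      integral_univ_inv_one_add_sq, abs_of_pos hs, smul_eq_mul, inv_mul_cancel_left₀ hs.ne']
  · exact (integrable_inv_one_add_sq.comp_div hs.ne').const_mul _
  · exact ae_of_all _ fun x => by positivity

lemma lintegral_sum_cauchy (s : Multiset ℂ) :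
    ∫⁻ x : ℝ, ENNReal.ofReal ((s.map fun w => |w.im| / ((x - w.re) ^ 2 + |w.im| ^ 2)).sum) ≤
      s.card * ENNReal.ofReal Real.pi := by
  induction s using Multiset.induction_on with
  | empty => simp
  | cons w s ih =>
    simp only [Multiset.map_cons, Multiset.sum_cons, Multiset.card_cons]
    have h : ∫⁻ x : ℝ, ENNReal.ofReal (|w.im| / ((x - w.re) ^ 2 + |w.im| ^ 2)) ≤
        ENNReal.ofReal Real.pi := by
      rcases eq_or_ne w.im 0 with h0 | h0
      · simp [h0]
      · exact (lintegral_cauchy _ (abs_pos.2 h0)).le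
    calc _ ≤ ∫⁻ x : ℝ, (ENNReal.ofReal (|w.im| / ((x - w.re) ^ 2 + |w.im| ^ 2)) +
          ENNReal.ofReal ((s.map fun w => |w.im| / ((x - w.re) ^ 2 + |w.im| ^ 2)).sum)) :=
          lintegral_mono fun x => ENNReal.ofReal_add_le
      _ = _ := lintegral_add_left (by fun_prop) _
      _ ≤ ENNReal.ofReal Real.pi + s.card * ENNReal.ofReal Real.pi := add_le_add h ih
      _ = _ := by push_cast; ring

open Polynomial in
/-- The total variation of `arctan (q / δ)` over the line is at most `π` times the degree of `q`. With
`Q = q + iδ`, the integrand is `|Im (Q' / Q)|`, and the partial fraction expansion of `Q' / Q` over the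
(non-real) roots of `Q` dominates it by a sum of Cauchy kernels. -/
lemma lintegral_variation (q : ℝ[X]) {δ : ℝ} (hδ : 0 < δ) :
    ∫⁻ x : ℝ, ENNReal.ofReal (δ * |q.derivative.eval x| / (q.eval x ^ 2 + δ ^ 2)) ≤
      q.natDegree * ENNReal.ofReal Real.pi := by
  set Q : ℂ[X] := q.map (algebraMap ℝ ℂ) + C (Complex.I * δ) with hQ
  have hs : Q.Splits := IsAlgClosed.splits Q
  have hcard : Q.roots.card ≤ q.natDegree := by
    rw [← hs.natDegree_eq_card_roots, hQ, natDegree_add_C, natDegree_map]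
  have hev : ∀ x : ℝ, Q.eval (x : ℂ) = (q.eval x : ℝ) + Complex.I * δ := by
    intro x
    rw [hQ, eval_add, eval_C]; congr 1; exact eval_map_apply (algebraMap ℝ ℂ) x
  have hev' : ∀ x : ℝ, Q.derivative.eval (x : ℂ) = (q.derivative.eval x : ℝ) := by
    intro x
    rw [hQ, derivative_add, derivative_C, add_zero, derivative_map]
    exact eval_map_apply (algebraMap ℝ ℂ) x
  have hne : ∀ x : ℝ, Q.eval (x : ℂ) ≠ 0 := by
    intro x h
    rw [hev] at h
    have := congrArg Complex.im h
    simp at this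
    exact hδ.ne' this
  refine le_trans (lintegral_mono fun x => ENNReal.ofReal_le_ofReal ?_)
    ((lintegral_sum_cauchy Q.roots).trans (by gcongr))
  have h1 := hs.eval_derivative_div_eval_of_ne_zero (hne x)
  have h2 : δ * |q.derivative.eval x| / (q.eval x ^ 2 + δ ^ 2) =
      |(Q.derivative.eval (x : ℂ) / Q.eval (x : ℂ)).im| := by
    have hp : 0 < q.eval x ^ 2 + δ ^ 2 := by positivity
    have hn : Complex.normSq ((q.eval x : ℝ) + Complex.I * δ) = q.eval x ^ 2 + δ ^ 2 := by
      simp [Complex.normSq_apply]; ring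
    rw [hev, hev', Complex.div_im, hn]
    simp only [Complex.ofReal_im, zero_mul, zero_div, zero_sub, abs_neg, Complex.ofReal_re,
      Complex.add_im, Complex.mul_im, Complex.I_re, Complex.I_im, one_mul, zero_add]
    rw [abs_div, abs_mul, abs_of_pos hδ, abs_of_pos hp, mul_comm]
  rw [h2, h1]
  have h3 : ∀ s : Multiset ℂ, |((s.map fun z => 1 / ((x : ℂ) - z)).sum).im| ≤
      (s.map fun w => |w.im| / ((x - w.re) ^ 2 + |w.im| ^ 2)).sum := by
    intro s
    induction s using Multiset.induction_on with
    | empty => simp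
    | cons w s ih =>
      simp only [Multiset.map_cons, Multiset.sum_cons, Complex.add_im]
      refine (abs_add_le _ _).trans (add_le_add (le_of_eq ?_) ih)
      rw [one_div, Complex.inv_im, abs_div]
      simp only [Complex.sub_im, Complex.ofReal_im, zero_sub, neg_neg, sq_abs]
      rw [abs_of_nonneg (Complex.normSq_nonneg _), Complex.normSq_apply]
      simp; ring_nf
  exact h3 _

/-- Integrals over `[-1, 1]` of a function of the truncated distance to a point. -/
lemma lintegral_trunc {g : ℝ → ENNReal} (hg : Measurable g) (r : ℝ) :
    ∫⁻ x in Set.Icc (-1 : ℝ) 1, g (min 1 |x - r|) ≤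
      2 * g 1 + 2 * ∫⁻ y in Set.Icc (0 : ℝ) 1, g y := by
  set G := (Set.Icc (0 : ℝ) 1).indicator g with hG
  have hGm : Measurable G := hg.indicator measurableSet_Icc
  have hGi : ∫⁻ y in Set.Icc (0 : ℝ) 1, g y = ∫⁻ y, G y := (lintegral_indicator measurableSet_Icc _).symm
  calc _ ≤ ∫⁻ x in Set.Icc (-1 : ℝ) 1, (g 1 + (G (x - r) + G (r - x))) := by
        refine lintegral_mono fun x => ?_
        rcases le_total 1 |x - r| with h | h
        · simp only [min_eq_left h]; exact le_self_add
        · simp only [min_eq_right h]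
          rcases abs_cases (x - r) with ⟨h1, h2⟩ | ⟨h1, h2⟩
          · have : G (x - r) = g (x - r) := Set.indicator_of_mem (Set.mem_Icc.2 ⟨h2, h1 ▸ h⟩) _
            rw [h1, this]
            exact le_self_add.trans le_add_self
          · have : G (r - x) = g (r - x) := Set.indicator_of_mem (Set.mem_Icc.2 ⟨by linarith, by linarith⟩) _
            rw [h1, neg_sub, this]
            exact le_add_self.trans le_add_self
    _ ≤ 2 * g 1 + ∫⁻ x, (G (x - r) + G (r - x)) := by
        rw [lintegral_add_left measurable_const]
        refine add_le_add (le_of_eq ?_) (setLIntegral_le_lintegral _ _)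
        simp only [lintegral_const, MeasurableSet.univ, Measure.restrict_apply, Set.univ_inter,
          Real.volume_Icc]
        norm_num [mul_comm]
    _ = _ := by
        rw [lintegral_add_left (by fun_prop), lintegral_sub_right_eq_self G r,
          lintegral_sub_left_eq_self G r, hGi, two_mul (lintegral _ _)]

/-- A function controlled by the distance to the nearest of at most `D + 1` centers is integrated by summing
over the centers. -/
lemma lintegral_centers {D : ℕ} {R : Finset ℝ} (hR : R.card ≤ D + 1) {E : ℝ → ENNReal}
    {g : ℝ → ENNReal} (hg : Measurable g)
    (h : ∀ x : ℝ, |x| ≤ 1 → ∃ r ∈ R, E x ≤ g (min 1 |x - r|)) :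
    ∫⁻ x in Set.Icc (-1 : ℝ) 1, E x ≤
      ((D + 1 : ℕ) : ENNReal) * (2 * g 1 + 2 * ∫⁻ y in Set.Icc (0 : ℝ) 1, g y) := by
  calc _ ≤ ∫⁻ x in Set.Icc (-1 : ℝ) 1, ∑ r ∈ R, g (min 1 |x - r|) := by
        refine setLIntegral_mono' measurableSet_Icc fun x hx => ?_
        obtain ⟨r, hr, hE⟩ := h x (abs_le.2 hx)
        exact hE.trans (Finset.single_le_sum (f := fun r => g (min 1 |x - r|)) (fun _ _ => zero_le) hr)
    _ = ∑ r ∈ R, ∫⁻ x in Set.Icc (-1 : ℝ) 1, g (min 1 |x - r|) :=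
        lintegral_finsetSum _ fun r _ => hg.comp (by fun_prop)
    _ ≤ ∑ r ∈ R, (2 * g 1 + 2 * ∫⁻ y in Set.Icc (0 : ℝ) 1, g y) :=
        Finset.sum_le_sum fun r _ => lintegral_trunc hg r
    _ ≤ _ := by
        rw [Finset.sum_const, nsmul_eq_mul]; gcongr

/-! ### The decay profile and its averages -/

/-- The profile `min(1, |a|^{-1/m}) · (B + log⁺|a| / m)^r`, by which all the integrals are measured; `a`
stands for a coefficient of the polynomial, in units of `t`. The shift `B` (at least `r`) makes it
non-increasing in `|a|`. -/
def decay (m : ℕ) (B : ℝ) (r : ℕ) (a : ℝ) : ℝ :=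
  Real.exp (-(a.posLog / m)) * (B + a.posLog / m) ^ r

lemma posLog_div_nonneg (m : ℕ) (a : ℝ) : 0 ≤ a.posLog / m :=
  div_nonneg Real.posLog_nonneg (Nat.cast_nonneg m)

@[fun_prop]
lemma continuous_decay (m : ℕ) (B : ℝ) (r : ℕ) : Continuous (decay m B r) := by
  unfold decay; fun_prop

lemma decay_nonneg {m : ℕ} {B : ℝ} (hB : 0 ≤ B) (r : ℕ) (a : ℝ) : 0 ≤ decay m B r a := by
  have := posLog_div_nonneg m a
  unfold decay; positivity

lemma decay_mono_r {m : ℕ} {B : ℝ} (hB : 1 ≤ B) {r s : ℕ} (h : r ≤ s) (a : ℝ) :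
    decay m B r a ≤ decay m B s a := by
  have := posLog_div_nonneg m a
  unfold decay
  gcongr
  linarith

lemma exp_neg_mul_pow_antitone {B : ℝ} (hB : 0 < B) {r : ℕ} (hr : (r : ℝ) ≤ B) {x y : ℝ}
    (hx : 0 ≤ x) (hxy : x ≤ y) :
    Real.exp (-y) * (B + y) ^ r ≤ Real.exp (-x) * (B + x) ^ r := by
  have h1 : (B + y) ^ r ≤ Real.exp (y - x) * (B + x) ^ r := by
    have hBx : 0 < B + x := by positivity
    have h2 : B + y ≤ (B + x) * Real.exp ((y - x) / (B + x)) := by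
      have := Real.add_one_le_exp ((y - x) / (B + x))
      calc B + y = (B + x) * ((y - x) / (B + x) + 1) := by field_simp; ring
        _ ≤ _ := by gcongr
    calc (B + y) ^ r ≤ ((B + x) * Real.exp ((y - x) / (B + x))) ^ r := by
          gcongr; linarith
      _ = Real.exp (r * ((y - x) / (B + x))) * (B + x) ^ r := by
          rw [mul_pow, ← Real.exp_nat_mul]; ring
      _ ≤ Real.exp (y - x) * (B + x) ^ r := by
          gcongr
          rw [mul_div_assoc', div_le_iff₀ hBx]
          nlinarith
  calc _ ≤ Real.exp (-y) * (Real.exp (y - x) * (B + x) ^ r) := by gcongr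
    _ = _ := by rw [← mul_assoc, ← Real.exp_add]; ring_nf

lemma decay_le_pow {m : ℕ} {B : ℝ} (hB : 0 < B) {r : ℕ} (hr : (r : ℝ) ≤ B) (a : ℝ) :
    decay m B r a ≤ B ^ r := by
  have := exp_neg_mul_pow_antitone hB hr le_rfl (posLog_div_nonneg m a)
  simpa [decay] using this

/-- If `a` is smaller than `A` by at most a factor `R ^ D`, the profile at `a` is bounded through `A`. -/
lemma decay_le_of_le {m D : ℕ} {B : ℝ} (hB : 0 < B) {r : ℕ} (hr : (r : ℝ) ≤ B) {a A R : ℝ}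
    (hR : 1 ≤ R) (h : |A| ≤ R ^ D * |a|) :
    decay m B r a ≤ (B + A.posLog / m) ^ r * (R ^ ((D : ℝ) / m) * Real.exp (-(A.posLog / m))) := by
  have hA := posLog_div_nonneg m A
  have ha := posLog_div_nonneg m a
  have hlog : 0 ≤ Real.log R := Real.log_nonneg hR
  have hRe : R ^ ((D : ℝ) / m) = Real.exp (D * Real.log R / m) := by
    rw [Real.rpow_def_of_pos (by linarith)]; ring_nf
  have h1 : A.posLog / m ≤ D * Real.log R / m + a.posLog / m := by
    rw [← add_div]
    gcongr
    calc A.posLog = |A|.posLog := (Real.posLog_abs A).symm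
      _ ≤ (R ^ D * |a|).posLog := Real.posLog_le_posLog (abs_nonneg _) h
      _ ≤ (R ^ D).posLog + |a|.posLog := Real.posLog_mul
      _ = _ := by
        rw [Real.posLog_abs, Real.posLog_pow, Real.posLog_eq_log (by rwa [abs_of_nonneg (by linarith)])]
  have h2 : (0 : ℝ) ≤ D * Real.log R / m := by positivity
  rw [hRe, ← Real.exp_add]
  rcases le_total (a.posLog / m) (A.posLog / m) with hle | hle
  · rw [decay, mul_comm]
    gcongr
    linarith
  · refine (exp_neg_mul_pow_antitone hB hr hA hle).trans ?_
    rw [mul_comm]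
    gcongr
    linarith

lemma abs_le_of_min_pow {A P : ℝ} {y : ℝ} {D : ℕ} (hy : 0 < y) (h : |A| * y ^ D ≤ 3 ^ D * |P|) :
    |A| ≤ (3 / y) ^ D * |P| := by
  rw [div_pow, div_mul_eq_mul_div, le_div_iff₀ (by positivity)]
  exact h

open Polynomial in
/-- Averaging over `[-1, 1]` a polynomial of the critical degree `m` costs one logarithm. -/
lemma lintegral_decay_log {m : ℕ} (hm : 0 < m) {B : ℝ} (hB : 2 ≤ B) {r : ℕ} (hr : (r : ℝ) ≤ B)
    (p : ℝ[X]) (hp : p.natDegree ≤ m) (j : ℕ) :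
    ∫⁻ x in Set.Icc (-1 : ℝ) 1, ENNReal.ofReal (decay m B r (p.eval x)) ≤
      ENNReal.ofReal (12 * (m + 1) * decay m B (r + 1) (p.coeff j)) := by
  obtain ⟨R, hR, hc⟩ := exists_centers p hp
  set A := p.coeff j
  set Y := A.posLog / m with hY
  have hY0 : 0 ≤ Y := posLog_div_nonneg m A
  -- `σ = min(1, |A|^{-1/m})` is the width of the set around a center where `p` may be small
  set σ := Real.exp (-Y) with hσ
  have hσ0 : 0 < σ := Real.exp_pos _
  have hσ1 : σ ≤ 1 := Real.exp_le_one_iff.2 (by linarith)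
  have hm' : (0 : ℝ) < m := by exact_mod_cast hm
  set K := 6 * (B + Y) ^ r with hK
  have hK0 : 0 < K := by positivity
  have hg : Measurable fun y : ℝ => ENNReal.ofReal (K * (σ / (σ + y))) := by fun_prop
  refine (lintegral_centers hR hg fun x hx => ?_).trans ?_
  · obtain ⟨s, hs, h⟩ := hc x hx
    refine ⟨s, hs, ENNReal.ofReal_le_ofReal ?_⟩
    have hj := h j
    set y := min 1 |x - s|
    have hy0 : 0 ≤ y := by positivity
    have hy1 : y ≤ 1 := min_le_left _ _
    have hle : decay m B r (p.eval x) ≤ (B + Y) ^ r :=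
      (decay_le_pow (by linarith) hr _).trans (by gcongr; linarith)
    rcases le_total y σ with hys | hys
    · have h1 : 1 / 2 ≤ σ / (σ + y) := by
        rw [div_le_div_iff₀ (by norm_num) (by positivity)]; linarith
      have : (0 : ℝ) ≤ (B + Y) ^ r := by positivity
      nlinarith
    · have hy : 0 < y := hσ0.trans_le hys
      have h3 : 1 ≤ 3 / y := by rw [le_div_iff₀ hy]; linarith
      have h2 := decay_le_of_le (m := m) (D := m) (B := B) (by linarith) hr h3 (abs_le_of_min_pow hy hj)
      rw [div_self hm'.ne', Real.rpow_one] at h2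
      have h4 : 3 / y * σ ≤ 6 * (σ / (σ + y)) := by
        rw [div_mul_eq_mul_div, mul_div_assoc', div_le_div_iff₀ hy (by positivity)]
        nlinarith
      refine h2.trans ((mul_le_mul_of_nonneg_left h4 (by positivity)).trans (le_of_eq ?_))
      rw [hK]; ring
  · have hint : ∫⁻ y in Set.Icc (0 : ℝ) 1, ENNReal.ofReal (K * (σ / (σ + y))) ≤
        ENNReal.ofReal (K * (σ * (1 + Y))) := by
      have hcont : ContinuousOn (fun y : ℝ => K * (σ / (σ + y))) (Set.Icc 0 1) := by
        refine ContinuousOn.mul continuousOn_const (continuousOn_const.div (by fun_prop) ?_)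
        intro y hy; have := hy.1; positivity
      rw [← ofReal_integral_eq_lintegral_ofReal (hcont.integrableOn_Icc)
        ((ae_restrict_iff' measurableSet_Icc).2 (ae_of_all _ fun y hy => by
          have := hy.1; positivity))]
      refine ENNReal.ofReal_le_ofReal ?_
      rw [integral_Icc_eq_integral_Ioc, ← intervalIntegral.integral_of_le zero_le_one]
      have hF : ∫ y in (0 : ℝ)..1, K * (σ / (σ + y)) =
          K * (σ * Real.log (σ + 1)) - K * (σ * Real.log (σ + 0)) := by
        refine intervalIntegral.integral_eq_sub_of_hasDerivAt (f := fun y => K * (σ * Real.log (σ + y)))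
          (fun y hy => ?_) ?_
        · rw [Set.uIcc_of_le zero_le_one] at hy
          have := hy.1
          have h1 : HasDerivAt (fun y : ℝ => σ + y) 1 y := (hasDerivAt_id y).const_add σ
          have := ((h1.log (by positivity)).const_mul σ).const_mul K
          exact this.congr_deriv (by rw [mul_one_div])
        · rw [intervalIntegrable_iff_integrableOn_Icc_of_le zero_le_one]
          exact hcont.integrableOn_Icc
      rw [hF, add_zero, hσ, Real.log_exp, ← hσ]
      have : Real.log (σ + 1) ≤ 1 := by
        have := Real.log_le_sub_one_of_pos (show 0 < σ + 1 by positivity)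
        linarith
      have : K * (σ * Real.log (σ + 1)) ≤ K * (σ * 1) := by gcongr
      nlinarith
    refine (mul_le_mul_right (add_le_add le_rfl (mul_le_mul_right hint 2)) _).trans ?_
    rw [show (2 : ENNReal) = ENNReal.ofReal 2 by simp, ← ENNReal.ofReal_mul (by norm_num),
      ← ENNReal.ofReal_mul (by norm_num), ← ENNReal.ofReal_add (by positivity) (by positivity),
      ← ENNReal.ofReal_natCast, ← ENNReal.ofReal_mul (by positivity)]
    refine ENNReal.ofReal_le_ofReal ?_
    have h1 : σ / (σ + 1) ≤ σ := div_le_self hσ0.le (by linarith)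
    calc ((m + 1 : ℕ) : ℝ) * (2 * (K * (σ / (σ + 1))) + 2 * (K * (σ * (1 + Y))))
        ≤ ((m + 1 : ℕ) : ℝ) * (2 * (K * σ) + 2 * (K * (σ * (1 + Y)))) := by gcongr
      _ = (m + 1) * (12 * (σ * (B + Y) ^ r * (2 + Y))) := by rw [hK]; push_cast; ring
      _ ≤ (m + 1) * (12 * (σ * (B + Y) ^ r * (B + Y))) := by gcongr
      _ = _ := by rw [decay, ← hY, ← hσ]; ring

lemma lintegral_rpow_lt_top {α : ℝ} (hα : α < 1) :
    ∫⁻ y in Set.Icc (0 : ℝ) 1, ENNReal.ofReal y ^ (-α) < ⊤ := by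
  have h := (intervalIntegral.intervalIntegrable_rpow' (a := 0) (b := 1) (r := -α) (by linarith))
  rw [intervalIntegrable_iff_integrableOn_Ioc_of_le zero_le_one] at h
  rw [setLIntegral_congr Ioc_ae_eq_Icc.symm]
  refine lt_of_le_of_lt (le_of_eq ?_) h.2
  refine setLIntegral_congr_fun measurableSet_Ioc fun y hy => ?_
  simp only
  rw [ENNReal.ofReal_rpow_of_pos hy.1, Real.enorm_of_nonneg (Real.rpow_nonneg hy.1.le _)]

open Polynomial in
/-- Averaging over `[-1, 1]` a polynomial of subcritical degree costs only a constant, because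
`|p|^{-1/m}` is then integrable. -/
lemma exists_lintegral_decay {m : ℕ} (hm : 0 < m) :
    ∃ C : ℝ, 0 < C ∧ ∀ {B : ℝ}, 2 ≤ B → ∀ {r : ℕ}, (r : ℝ) ≤ B →
      ∀ (p : ℝ[X]), p.natDegree < m → ∀ j : ℕ,
      ∫⁻ x in Set.Icc (-1 : ℝ) 1, ENNReal.ofReal (decay m B r (p.eval x)) ≤
        ENNReal.ofReal (C * decay m B r (p.coeff j)) := by
  have hm' : (0 : ℝ) < m := by exact_mod_cast hm
  set α : ℝ := ((m - 1 : ℕ) : ℝ) / m with hα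
  have hα1 : α < 1 := by
    rw [hα, div_lt_one hm']; exact_mod_cast Nat.sub_lt hm one_pos
  have hα0 : 0 ≤ α := by positivity
  set I := ∫⁻ y in Set.Icc (0 : ℝ) 1, ENNReal.ofReal y ^ (-α) with hI
  have hIt : I ≠ ⊤ := (lintegral_rpow_lt_top hα1).ne
  refine ⟨3 * (m * (2 + 2 * I.toReal)), by positivity, fun {B} hB {r} hr p hp j => ?_⟩
  obtain ⟨R, hR, hc⟩ := exists_centers p (D := m - 1) (by omega)
  set A := p.coeff j
  set Y := A.posLog / m with hY
  have hY0 : 0 ≤ Y := posLog_div_nonneg m A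
  set σ := Real.exp (-Y) with hσ
  have hσ0 : 0 < σ := Real.exp_pos _
  set K := 3 * ((B + Y) ^ r * σ) with hK
  have hK0 : 0 < K := by positivity
  have hg : Measurable fun y : ℝ => ENNReal.ofReal K * ENNReal.ofReal y ^ (-α) := by fun_prop
  refine (lintegral_centers hR hg fun x hx => ?_).trans ?_
  · obtain ⟨s, hs, h⟩ := hc x hx
    refine ⟨s, hs, ?_⟩
    have hj := h j
    set y := min 1 |x - s|
    have hy0 : 0 ≤ y := by positivity
    have hy1 : y ≤ 1 := min_le_left _ _
    rcases hy0.eq_or_lt with hy | hy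
    · rw [← hy]
      rcases hα0.eq_or_lt with h0 | h0
      · have hD : m - 1 = 0 := by
          have := h0.symm
          rw [hα, div_eq_zero_iff] at this
          rcases this with h | h
          · exact_mod_cast h
          · exact absurd h hm'.ne'
        rw [hD, pow_zero, pow_zero] at hj
        have h2 := decay_le_of_le (m := m) (D := 0) (B := B) (by linarith) hr (le_refl (1 : ℝ))
          (A := A) (a := p.eval x) (by simpa using hj)
        simp only [← h0, neg_zero, ENNReal.rpow_zero, mul_one]
        refine ENNReal.ofReal_le_ofReal (h2.trans ?_)
        rw [Real.one_rpow, one_mul, ← hY, ← hσ, hK]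
        have : 0 < (B + Y) ^ r * σ := by positivity
        linarith
      · rw [ENNReal.ofReal_zero, ENNReal.zero_rpow_of_neg (by linarith), ENNReal.mul_top (by simpa using hK0)]
        exact le_top
    · rw [ENNReal.ofReal_rpow_of_pos hy, ← ENNReal.ofReal_mul hK0.le]
      refine ENNReal.ofReal_le_ofReal ?_
      have h3 : 1 ≤ 3 / y := by rw [le_div_iff₀ hy]; linarith
      refine (decay_le_of_le (m := m) (D := m - 1) (B := B) (by linarith) hr h3
        (abs_le_of_min_pow hy hj)).trans ?_
      rw [← hα, ← hY, ← hσ, hK, Real.div_rpow (by norm_num) hy.le, Real.rpow_neg hy.le]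
      have h4 : (3 : ℝ) ^ α ≤ 3 := by
        calc (3 : ℝ) ^ α ≤ 3 ^ (1 : ℝ) := Real.rpow_le_rpow_of_exponent_le (by norm_num) hα1.le
          _ = 3 := Real.rpow_one 3
      have h5 : 0 < y ^ α := Real.rpow_pos_of_pos hy α
      calc _ = 3 ^ α * (((B + Y) ^ r * σ) * (y ^ α)⁻¹) := by ring
        _ ≤ 3 * (((B + Y) ^ r * σ) * (y ^ α)⁻¹) := by gcongr
        _ = _ := by ring
  · rw [lintegral_const_mul _ (by fun_prop), ← hI, Nat.sub_add_cancel hm]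
    have e : 3 * (m * (2 + 2 * I.toReal)) * decay m B r A = m * ((2 * K) + 2 * (K * I.toReal)) := by
      rw [decay, ← hY, ← hσ, hK]; ring
    clear_value K
    rw [e, ENNReal.ofReal_mul (Nat.cast_nonneg m), ENNReal.ofReal_add (by positivity) (by positivity),
      ENNReal.ofReal_mul zero_le_two, ENNReal.ofReal_mul zero_le_two,
      ENNReal.ofReal_mul hK0.le, ENNReal.ofReal_toReal hIt]
    simp

/-! ### The van der Corput estimate -/

lemma enorm_intervalIntegral_le {g : ℝ → ℝ} {x : ℝ} (hx : |x| ≤ 1) :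
    ‖∫ y in (-1 : ℝ)..x, g y‖ₑ ≤ ∫⁻ y in Set.Icc (-1 : ℝ) 1, ‖g y‖ₑ := by
  have := abs_le.1 hx
  rw [intervalIntegral.integral_of_le this.1]
  refine (enorm_integral_le_lintegral_enorm _).trans (lintegral_mono_set ?_)
  exact Set.Ioc_subset_Icc_self.trans (Set.Icc_subset_Icc_right this.2)

open Polynomial in
/-- The truncation `δ² / (q² + δ²)`, with `δ = σ⁻¹`, has small integral: it is appreciable only where
`|q|` is at most of the order of `δ`. -/
lemma lintegral_truncation {m : ℕ} (hm : 2 ≤ m) (q : ℝ[X]) (hq : q.natDegree ≤ m - 1) (j : ℕ) {σ : ℝ}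
    (hσ0 : 0 < σ) (hσ1 : σ ≤ 1) (hA : 1 ≤ σ ^ m * |q.coeff j|) :
    ∫⁻ x in Set.Icc (-1 : ℝ) 1, ENNReal.ofReal (σ⁻¹ ^ 2 / (q.eval x ^ 2 + σ⁻¹ ^ 2)) ≤
      ENNReal.ofReal (20 * m * 9 ^ m * σ) := by
  obtain ⟨R, hR, hc⟩ := exists_centers q hq
  set K : ℝ := 2 * 9 ^ (m - 1) with hK
  have hK0 : 0 < K := by positivity
  have hg : Measurable fun y : ℝ => ENNReal.ofReal (K * (σ ^ 2 / (σ ^ 2 + y ^ 2))) := by fun_prop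
  refine (lintegral_centers hR hg fun x hx => ?_).trans ?_
  · obtain ⟨s, hs, h⟩ := hc x hx
    refine ⟨s, hs, ENNReal.ofReal_le_ofReal ?_⟩
    have hj := h j
    set y := min 1 |x - s|
    have hy0 : 0 ≤ y := by positivity
    set P := q.eval x
    have h1 : σ⁻¹ ^ 2 / (P ^ 2 + σ⁻¹ ^ 2) = 1 / (σ ^ 2 * P ^ 2 + 1) := by field_simp
    rw [h1, ← mul_div_assoc, div_le_div_iff₀ (by positivity) (by positivity), one_mul]
    have h9 : (1 : ℝ) ≤ 9 ^ (m - 1) := one_le_pow₀ (by norm_num)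
    rcases le_total y σ with hys | hys
    · have : y ^ 2 ≤ σ ^ 2 := by gcongr
      have : 0 ≤ σ ^ 2 * (σ ^ 2 * P ^ 2) := by positivity
      have : σ ^ 2 + y ^ 2 ≤ 2 * σ ^ 2 * (σ ^ 2 * P ^ 2 + 1) := by nlinarith
      have h0 : 0 ≤ 2 * σ ^ 2 * (σ ^ 2 * P ^ 2 + 1) := by positivity
      rw [hK]
      calc _ ≤ 1 * (2 * σ ^ 2 * (σ ^ 2 * P ^ 2 + 1)) := by linarith
        _ ≤ 9 ^ (m - 1) * (2 * σ ^ 2 * (σ ^ 2 * P ^ 2 + 1)) := by gcongr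
        _ = _ := by ring
    · -- here `y ≤ 3^(m-1) σ² |P|`, since `(σ / y)^(m-1) ≤ σ / y`
      have hy : 0 < y := hσ0.trans_le hys
      have h2 : y ≤ 3 ^ (m - 1) * (σ ^ 2 * |P|) := by
        obtain ⟨e, rfl⟩ := Nat.exists_eq_add_of_le hm
        have e1 : 2 + e - 1 = e + 1 := by omega
        rw [e1] at hj ⊢
        have h3 : y ^ (e + 1) ≤ σ ^ (2 + e) * (3 ^ (e + 1) * |P|) := by
          calc y ^ (e + 1) = 1 * y ^ (e + 1) := (one_mul _).symm
            _ ≤ (σ ^ (2 + e) * |q.coeff j|) * y ^ (e + 1) := by gcongr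
            _ = σ ^ (2 + e) * (|q.coeff j| * y ^ (e + 1)) := by ring
            _ ≤ _ := by gcongr
        have h4 : σ ^ (2 + e) * (3 ^ (e + 1) * |P|) ≤ y ^ e * (3 ^ (e + 1) * (σ ^ 2 * |P|)) := by
          calc _ = σ ^ e * (3 ^ (e + 1) * (σ ^ 2 * |P|)) := by ring
            _ ≤ _ := by gcongr
        have h5 := h3.trans h4
        rw [pow_succ] at h5
        exact le_of_mul_le_mul_left h5 (by positivity)
      have h6 : y ^ 2 ≤ 9 ^ (m - 1) * (σ ^ 2 * (σ ^ 2 * P ^ 2)) := by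
        calc y ^ 2 ≤ (3 ^ (m - 1) * (σ ^ 2 * |P|)) ^ 2 := by gcongr
          _ = (3 ^ (m - 1)) ^ 2 * (σ ^ 2 * (σ ^ 2 * |P| ^ 2)) := by ring
          _ = _ := by rw [sq_abs, ← pow_mul, mul_comm (m - 1) 2, pow_mul]; norm_num
      have h7 : 0 ≤ 9 ^ (m - 1) * (σ ^ 2 * (σ ^ 2 * P ^ 2)) := by positivity
      have h8 : σ ^ 2 ≤ 9 ^ (m - 1) * σ ^ 2 := by nlinarith [sq_nonneg σ]
      rw [hK]
      nlinarith
  · have hint : ∫⁻ y in Set.Icc (0 : ℝ) 1, ENNReal.ofReal (K * (σ ^ 2 / (σ ^ 2 + y ^ 2))) ≤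
        ENNReal.ofReal (K * (σ * 4)) := by
      have e : ∀ y : ℝ, ENNReal.ofReal (K * (σ ^ 2 / (σ ^ 2 + y ^ 2))) =
          ENNReal.ofReal (K * σ) * ENNReal.ofReal (σ / ((y - 0) ^ 2 + σ ^ 2)) := by
        intro y
        rw [← ENNReal.ofReal_mul (by positivity)]
        congr 1; rw [sub_zero, add_comm]; ring
      simp_rw [e]
      rw [lintegral_const_mul _ (by fun_prop), ← mul_assoc,
        ENNReal.ofReal_mul (p := K * σ) (by positivity)]
      gcongr
      refine (setLIntegral_le_lintegral _ _).trans ?_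
      rw [lintegral_cauchy 0 hσ0]
      exact ENNReal.ofReal_le_ofReal Real.pi_le_four
    refine (mul_le_mul_right (add_le_add le_rfl (mul_le_mul_right hint 2)) _).trans ?_
    rw [show (2 : ENNReal) = ENNReal.ofReal 2 by simp, ← ENNReal.ofReal_mul (by norm_num),
      ← ENNReal.ofReal_mul (by norm_num), ← ENNReal.ofReal_add (by positivity) (by positivity),
      ← ENNReal.ofReal_natCast, ← ENNReal.ofReal_mul (by positivity)]
    refine ENNReal.ofReal_le_ofReal ?_
    have h1 : σ ^ 2 / (σ ^ 2 + 1 ^ 2) ≤ σ := by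
      rw [div_le_iff₀ (by positivity)]; nlinarith
    have h2 : ((m - 1 + 1 : ℕ) : ℝ) = m := by rw [Nat.sub_add_cancel (by omega)]
    rw [h2]
    calc (m : ℝ) * (2 * (K * (σ ^ 2 / (σ ^ 2 + 1 ^ 2))) + 2 * (K * (σ * 4)))
        ≤ m * (2 * (K * σ) + 2 * (K * (σ * 4))) := by gcongr
      _ = 20 * m * 9 ^ (m - 1) * σ := by rw [hK]; ring
      _ ≤ _ := by gcongr <;> norm_num

open Polynomial in
/-- Van der Corput estimate on `[-1, x]`. With `q = p'` and a threshold `δ`, one writes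
`φ'(p) = (φ ∘ p)' · q / (q² + δ²) + φ'(p) · δ² / (q² + δ²)`; the first term is integrated by parts, and the
second one is small because `q` is rarely small. -/
lemma van_der_corput {m : ℕ} (hm : 0 < m) (B : ℝ) (p : ℝ[X]) (hp : p.natDegree ≤ m) {j : ℕ} (hj : 0 < j)
    {φ : ℝ → ℝ} (hφ : ContDiff ℝ (⊤ : ℕ∞) φ) (hφ' : ∀ x, |deriv φ x| ≤ 1) (hφ1 : ∀ x, |φ x| ≤ 1)
    {x : ℝ} (hx : |x| ≤ 1) :
    ‖∫ y in (-1 : ℝ)..x, deriv φ (p.eval y)‖ₑ ≤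
      ENNReal.ofReal ((3 + 4 * m + 20 * m * 9 ^ m) * decay m B 0 (p.coeff j)) := by
  have hm' : (0 : ℝ) < m := by exact_mod_cast hm
  have hx' := abs_le.1 hx
  have hdφ : ∀ z, HasDerivAt φ (deriv φ z) z := fun z => (hφ.differentiable (by simp)).differentiableAt.hasDerivAt
  have hcφ' : Continuous (deriv φ) := hφ.continuous_deriv (by simp)
  set A := p.coeff j with hA
  set σ := Real.exp (-(A.posLog / m)) with hσ
  have hdec : decay m B 0 A = σ := by rw [decay, pow_zero, mul_one]
  rw [hdec]
  have hσ0 : 0 < σ := Real.exp_pos _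
  have hσ1 : σ ≤ 1 := Real.exp_le_one_iff.2 (by linarith [posLog_div_nonneg m A])
  rcases le_total |A| 1 with hA1 | hA1
  · have h1 : σ = 1 := by rw [hσ, (Real.posLog_eq_zero_iff A).2 hA1]; simp
    have h2 : ‖∫ y in (-1 : ℝ)..x, deriv φ (p.eval y)‖ ≤ 1 * |x - (-1)| :=
      intervalIntegral.norm_integral_le_of_norm_le_const fun y _ => (Real.norm_eq_abs _).le.trans (hφ' _)
    rw [Real.norm_eq_abs] at h2
    rw [Real.enorm_eq_ofReal_abs, h1]
    refine ENNReal.ofReal_le_ofReal (h2.trans ?_)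
    rw [abs_of_nonneg (by linarith)]
    have : (0 : ℝ) ≤ 4 * m + 20 * m * 9 ^ m := by positivity
    linarith
  have hσA : σ ^ m * |A| = 1 := by
    rw [hσ, ← Real.exp_nat_mul, Real.posLog_eq_log hA1]
    have : (m : ℝ) * -(Real.log A / m) = - Real.log |A| := by rw [Real.log_abs]; field_simp
    rw [this, Real.exp_neg, Real.exp_log (by linarith), inv_mul_cancel₀ (by linarith)]
  rcases (show m = 1 ∨ 2 ≤ m by omega) with rfl | hm2
  · -- an affine `p` is integrated exactly
    have hj1 : j = 1 := by
      by_contra h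
      have : A = 0 := coeff_eq_zero_of_natDegree_lt (by omega)
      rw [this] at hA1; norm_num at hA1
    subst hj1
    have hA0 : A ≠ 0 := by intro h; rw [h] at hA1; norm_num at hA1
    have hpd : ∀ y, HasDerivAt (fun y => p.eval y) A y := by
      intro y
      refine (p.hasDerivAt y).congr_deriv ?_
      have h1 : p.derivative.natDegree = 0 :=
        Nat.le_zero.1 ((natDegree_derivative_le p).trans (by omega))
      rw [eq_C_of_natDegree_eq_zero h1, eval_C, coeff_derivative]
      norm_num [hA]
    have hF : ∫ y in (-1 : ℝ)..x, deriv φ (p.eval y) = φ (p.eval x) / A - φ (p.eval (-1)) / A := by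
      refine intervalIntegral.integral_eq_sub_of_hasDerivAt (f := fun y => φ (p.eval y) / A)
        (fun y _ => ?_) ((hcφ'.comp p.continuous).intervalIntegrable _ _)
      exact (((hdφ _).comp y (hpd y)).div_const A).congr_deriv (by field_simp)
    rw [hF, Real.enorm_eq_ofReal_abs]
    refine ENNReal.ofReal_le_ofReal ?_
    rw [← sub_div, abs_div]
    have h1 : |φ (p.eval x) - φ (p.eval (-1))| ≤ 2 := by
      refine (abs_sub _ _).trans ?_
      linarith [hφ1 (p.eval x), hφ1 (p.eval (-1))]
    rw [div_le_iff₀ (by linarith), mul_assoc]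
    rw [pow_one] at hσA
    rw [hσA]; norm_num; linarith
  · set q := derivative p with hq
    -- `δ = |A|^{1/m}` balances the boundary terms, of size `1 / δ`, and the truncation error
    set δ := σ⁻¹ with hδ
    have hδ0 : 0 < δ := inv_pos.2 hσ0
    have hqdeg : q.natDegree ≤ m - 1 := (natDegree_derivative_le p).trans (by omega)
    have hcoef : 1 ≤ σ ^ m * |q.coeff (j - 1)| := by
      rw [hq, coeff_derivative, Nat.sub_add_cancel hj, abs_mul, ← mul_assoc, ← hA, hσA, one_mul]
      rw [show ((j - 1 : ℕ) : ℝ) + 1 = j by rw [← Nat.cast_add_one, Nat.sub_add_cancel hj], Nat.abs_cast]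
      exact_mod_cast hj
    have hW : ∀ y, 0 < q.eval y ^ 2 + δ ^ 2 := fun y => by positivity
    set H : ℝ → ℝ := fun y => q.eval y / (q.eval y ^ 2 + δ ^ 2) with hH
    set H' : ℝ → ℝ := fun y =>
      (q.derivative.eval y * (q.eval y ^ 2 + δ ^ 2) - q.eval y * (2 * q.eval y * q.derivative.eval y)) /
        (q.eval y ^ 2 + δ ^ 2) ^ 2 with hH'
    have hdH : ∀ y, HasDerivAt H (H' y) y := by
      intro y
      have h1 := q.hasDerivAt y
      have h2 : HasDerivAt (fun y => q.eval y ^ 2 + δ ^ 2) (2 * q.eval y * q.derivative.eval y) y := by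
        refine ((h1.pow 2).add_const (δ ^ 2)).congr_deriv ?_
        norm_num
      exact h1.div h2 (hW y).ne'
    have hcH : Continuous H := by
      refine Continuous.div (by fun_prop) (by fun_prop) fun y => (hW y).ne'
    have hcH' : Continuous H' := by
      refine Continuous.div (by fun_prop) (by fun_prop) fun y => (pow_pos (hW y) 2).ne'
    set u : ℝ → ℝ := fun y => φ (p.eval y) with hu
    set u' : ℝ → ℝ := fun y => deriv φ (p.eval y) * q.eval y with hu'
    have hdu : ∀ y, HasDerivAt u (u' y) y := fun y => (hdφ _).comp y (p.hasDerivAt y)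
    have hcu : Continuous u := hφ.continuous.comp p.continuous
    have hcv : Continuous fun y => deriv φ (p.eval y) := hcφ'.comp p.continuous
    have hcu' : Continuous u' := hcv.mul q.continuous
    have hparts := intervalIntegral.integral_mul_deriv_eq_deriv_mul (a := -1) (b := x)
      (fun y _ => hdH y) (fun y _ => hdu y) (hcH'.intervalIntegrable _ _) (hcu'.intervalIntegrable _ _)
    set T : ℝ → ℝ := fun y => deriv φ (p.eval y) * (δ ^ 2 / (q.eval y ^ 2 + δ ^ 2)) with hT
    have hcT : Continuous T :=
      hcv.mul (Continuous.div (by fun_prop) (by fun_prop) fun y => (hW y).ne')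
    have hsplit : ∫ y in (-1 : ℝ)..x, deriv φ (p.eval y) =
        (H x * u x - H (-1) * u (-1)) + -(∫ y in (-1 : ℝ)..x, H' y * u y) + ∫ y in (-1 : ℝ)..x, T y := by
      rw [← sub_eq_add_neg, ← hparts]
      refine Eq.trans ?_ (intervalIntegral.integral_add (f := fun y => H y * u' y) (g := T)
        ((hcH.mul hcu').intervalIntegrable _ _) (hcT.intervalIntegrable _ _))
      refine intervalIntegral.integral_congr fun y _ => ?_
      simp only [hH, hu', hT]
      have := (hW y).ne'
      field_simp
    have hHb : ∀ y, |H y| ≤ σ / 2 := by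
      intro y
      simp only [hH]
      have h1 : σ * δ = 1 := mul_inv_cancel₀ hσ0.ne'
      rw [abs_div, abs_of_pos (hW y), div_le_div_iff₀ (hW y) (by norm_num)]
      have h2 : 2 * (|q.eval y| * δ) ≤ q.eval y ^ 2 + δ ^ 2 := by
        nlinarith [sq_nonneg (|q.eval y| - δ), sq_abs (q.eval y)]
      calc |q.eval y| * 2 = σ * (2 * (|q.eval y| * δ)) := by linear_combination (-2 * |q.eval y|) * h1
        _ ≤ _ := by gcongr
    have hb1 : ‖H x * u x - H (-1) * u (-1)‖ₑ ≤ ENNReal.ofReal σ := by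
      rw [Real.enorm_eq_ofReal_abs]
      refine ENNReal.ofReal_le_ofReal ((abs_sub _ _).trans ?_)
      have h1 : ∀ y, |H y * u y| ≤ σ / 2 := fun y => by
        rw [abs_mul]
        calc |H y| * |u y| ≤ σ / 2 * 1 := by gcongr; exacts [hHb y, hφ1 _]
          _ = _ := mul_one _
      linarith [h1 x, h1 (-1)]
    have hb2 : ‖-(∫ y in (-1 : ℝ)..x, H' y * u y)‖ₑ ≤ ENNReal.ofReal (4 * m * σ) := by
      rw [enorm_neg]
      refine (enorm_intervalIntegral_le hx).trans ?_
      calc _ ≤ ∫⁻ y in Set.Icc (-1 : ℝ) 1, ENNReal.ofReal σ *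
              ENNReal.ofReal (δ * |q.derivative.eval y| / (q.eval y ^ 2 + δ ^ 2)) := by
            refine lintegral_mono fun y => ?_
            rw [← ENNReal.ofReal_mul hσ0.le, Real.enorm_eq_ofReal_abs]
            refine ENNReal.ofReal_le_ofReal ?_
            have e1 : H' y = q.derivative.eval y * (δ ^ 2 - q.eval y ^ 2) / (q.eval y ^ 2 + δ ^ 2) ^ 2 := by
              simp only [hH']; ring
            have e2 : σ * (δ * |q.derivative.eval y| / (q.eval y ^ 2 + δ ^ 2)) =
                |q.derivative.eval y| * (q.eval y ^ 2 + δ ^ 2) / (q.eval y ^ 2 + δ ^ 2) ^ 2 := by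
              have := (hW y).ne'
              rw [hδ] at this ⊢
              field_simp
            rw [abs_mul, e1, e2, abs_div, abs_mul, abs_of_pos (pow_pos (hW y) 2)]
            have h3 : |δ ^ 2 - q.eval y ^ 2| ≤ q.eval y ^ 2 + δ ^ 2 := by
              rw [abs_le]; constructor <;> nlinarith [sq_nonneg δ, sq_nonneg (q.eval y)]
            calc _ ≤ |q.derivative.eval y| * (q.eval y ^ 2 + δ ^ 2) / (q.eval y ^ 2 + δ ^ 2) ^ 2 * 1 := by
                  gcongr; exact hφ1 _
              _ = _ := mul_one _
        _ ≤ ENNReal.ofReal σ * (q.natDegree * ENNReal.ofReal Real.pi) := by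
            rw [lintegral_const_mul _ (by fun_prop)]
            gcongr
            exact (setLIntegral_le_lintegral _ _).trans (lintegral_variation q hδ0)
        _ ≤ ENNReal.ofReal σ * (m * ENNReal.ofReal 4) := by
            gcongr
            · omega
            · exact Real.pi_le_four
        _ = _ := by
            rw [← ENNReal.ofReal_natCast, ← ENNReal.ofReal_mul (by positivity),
              ← ENNReal.ofReal_mul (by positivity)]
            congr 1; ring
    have hb3 : ‖∫ y in (-1 : ℝ)..x, T y‖ₑ ≤ ENNReal.ofReal (20 * m * 9 ^ m * σ) := by
      refine (enorm_intervalIntegral_le hx).trans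
        (le_trans (lintegral_mono fun y => ?_) (lintegral_truncation hm2 q hqdeg (j - 1) hσ0 hσ1 hcoef))
      rw [Real.enorm_eq_ofReal_abs]
      refine ENNReal.ofReal_le_ofReal ?_
      have h0 : 0 ≤ δ ^ 2 / (q.eval y ^ 2 + δ ^ 2) := div_nonneg (by positivity) (hW y).le
      simp only [hT]
      rw [abs_mul, abs_of_nonneg h0]
      exact mul_le_of_le_one_left h0 (hφ' _)
    rw [hsplit]
    refine (enorm_add_le _ _).trans ((add_le_add ((enorm_add_le _ _).trans (add_le_add hb1 hb2)) hb3).trans ?_)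
    rw [← ENNReal.ofReal_add (by positivity) (by positivity), ← ENNReal.ofReal_add (by positivity) (by positivity)]
    refine ENNReal.ofReal_le_ofReal ?_
    nlinarith

/-! ### Densities of bounded variation as averages over windows -/

/-- A fixed smooth mollifier with integral one, supported in `[-1, 1]`. -/
def moll : ℝ → ℝ :=
  (⟨1 / 2, 1, by norm_num, by norm_num⟩ : ContDiffBump (0 : ℝ)).normed volume

lemma contDiff_moll : ContDiff ℝ (⊤ : ℕ∞) moll := ContDiffBump.contDiff_normed _

lemma continuous_moll : Continuous moll := contDiff_moll.continuous

lemma continuous_deriv_moll : Continuous (deriv moll) := contDiff_moll.continuous_deriv (by simp)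

lemma hasCompactSupport_moll : HasCompactSupport moll := ContDiffBump.hasCompactSupport_normed _

lemma tsupport_moll : tsupport moll = Set.Icc (-1) 1 := by
  rw [moll, ContDiffBump.tsupport_normed_eq, Real.closedBall_eq_Icc]; norm_num

lemma moll_eq_zero {x : ℝ} (hx : x ∉ Set.Icc (-1 : ℝ) 1) : moll x = 0 :=
  image_eq_zero_of_notMem_tsupport (tsupport_moll ▸ hx)

lemma deriv_moll_eq_zero {x : ℝ} (hx : x ∉ Set.Icc (-1 : ℝ) 1) : deriv moll x = 0 := by
  by_contra h
  exact hx (tsupport_moll ▸ support_deriv_subset (f := moll) h)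

lemma integrable_moll : Integrable moll :=
  continuous_moll.integrable_of_hasCompactSupport hasCompactSupport_moll

lemma integrable_deriv_moll : Integrable (deriv moll) :=
  continuous_deriv_moll.integrable_of_hasCompactSupport hasCompactSupport_moll.deriv

lemma integral_moll : ∫ x, moll x = 1 := ContDiffBump.integral_normed _

lemma lintegral_moll : ∫⁻ x, ‖moll x‖ₑ = 1 := by
  have h : ∀ x, ‖moll x‖ₑ = ENNReal.ofReal (moll x) := fun x =>
    Real.enorm_of_nonneg (ContDiffBump.nonneg_normed _ _)
  simp_rw [h]
  rw [← ofReal_integral_eq_lintegral_ofReal integrable_moll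
    (Filter.Eventually.of_forall fun x => ContDiffBump.nonneg_normed _ _), integral_moll, ENNReal.ofReal_one]

/-- A function of `L¹`-norm one whose distributional derivative is dominated by a measure of mass at most
one; only this domination of the derivative is needed in the estimates. -/
def UnitBV (ρ : ℝ → ℝ) : Prop :=
  Measurable ρ ∧ Integrable ρ ∧ (∫⁻ x, ‖ρ x‖ₑ = 1) ∧ ∃ μ : Measure ℝ, μ Set.univ ≤ 1 ∧
    ∀ ψ : ℝ → ℝ, ContDiff ℝ (⊤ : ℕ∞) ψ → HasCompactSupport ψ →
      ‖∫ x, ρ x * deriv ψ x‖ₑ ≤ ∫⁻ x, ‖ψ x‖ₑ ∂μ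

/-- The weight of the window `[b - 1, b + 1]`: the total variation, localized by the mollifier. -/
def window (μ : Measure ℝ) (ρ : ℝ → ℝ) (b : ℝ) : ENNReal :=
  (∫⁻ x, ‖moll (b - x)‖ₑ ∂μ) + ∫⁻ x, ‖deriv moll (b - x)‖ₑ * ‖ρ x‖ₑ

lemma measurable_window {μ : Measure ℝ} [SFinite μ] {ρ : ℝ → ℝ} (hρ : Measurable ρ) :
    Measurable (window μ ρ) := by
  have h1 := continuous_moll.measurable
  have h2 := continuous_deriv_moll.measurable
  refine Measurable.add ?_ ?_
  · exact Measurable.lintegral_prod_right' (f := fun p : ℝ × ℝ => ‖moll (p.1 - p.2)‖ₑ) (by fun_prop)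
  · exact Measurable.lintegral_prod_right'
      (f := fun p : ℝ × ℝ => ‖deriv moll (p.1 - p.2)‖ₑ * ‖ρ p.2‖ₑ) (by fun_prop)

lemma lintegral_window {μ : Measure ℝ} [SFinite μ] (hμ : μ Set.univ ≤ 1) {ρ : ℝ → ℝ} (hρ : Measurable ρ)
    (hρ1 : ∫⁻ x, ‖ρ x‖ₑ = 1) :
    ∫⁻ b, window μ ρ b ≤ 1 + ∫⁻ x, ‖deriv moll x‖ₑ := by
  have h1 := continuous_moll.measurable
  have h2 := continuous_deriv_moll.measurable
  unfold window
  rw [lintegral_add_left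
    (Measurable.lintegral_prod_right' (f := fun p : ℝ × ℝ => ‖moll (p.1 - p.2)‖ₑ) (by fun_prop))]
  refine add_le_add ?_ ?_
  · rw [lintegral_lintegral_swap (by fun_prop)]
    have : ∀ x, ∫⁻ b, ‖moll (b - x)‖ₑ = 1 := fun x => by
      rw [lintegral_sub_right_eq_self (fun b => ‖moll b‖ₑ) x, lintegral_moll]
    simp_rw [this]
    simpa using hμ
  · rw [lintegral_lintegral_swap (by fun_prop)]
    have : ∀ x, ∫⁻ b, ‖deriv moll (b - x)‖ₑ * ‖ρ x‖ₑ = (∫⁻ x, ‖deriv moll x‖ₑ) * ‖ρ x‖ₑ := fun x => by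
      rw [lintegral_mul_const _ (by fun_prop), lintegral_sub_right_eq_self (fun b => ‖deriv moll b‖ₑ) x]
    simp_rw [this]
    rw [lintegral_const_mul _ (by fun_prop), hρ1, mul_one]

/-- Integration by parts in a window: only the primitive of `g`, not its size, enters the bound. -/
lemma enorm_window_le {μ : Measure ℝ} {ρ : ℝ → ℝ} (hρ : Measurable ρ) (hρi : Integrable ρ)
    (hμ : ∀ ψ : ℝ → ℝ, ContDiff ℝ (⊤ : ℕ∞) ψ → HasCompactSupport ψ →
      ‖∫ x, ρ x * deriv ψ x‖ₑ ≤ ∫⁻ x, ‖ψ x‖ₑ ∂μ)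
    {g : ℝ → ℝ} (hg : ContDiff ℝ (⊤ : ℕ∞) g) (b : ℝ) {S : ENNReal}
    (hS : ∀ x : ℝ, |x| ≤ 1 → ‖∫ y in (-1 : ℝ)..x, g (b + y)‖ₑ ≤ S) :
    ‖∫ x, g x * ρ x * moll (b - x)‖ₑ ≤ S * window μ ρ b := by
  set Φ : ℝ → ℝ := fun x => ∫ y in (b - 1)..x, g y with hΦ
  have hdΦ : ∀ x, HasDerivAt Φ (g x) x := fun x =>
    intervalIntegral.integral_hasDerivAt_right (hg.continuous.intervalIntegrable _ _)
      hg.continuous.aestronglyMeasurable.stronglyMeasurableAtFilter hg.continuous.continuousAt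
  have hcΦ : ContDiff ℝ (⊤ : ℕ∞) Φ := by
    refine contDiff_infty_iff_deriv.2 ⟨fun x => (hdΦ x).differentiableAt, ?_⟩
    rwa [show deriv Φ = g from funext fun x => (hdΦ x).deriv]
  have hΦS : ∀ x, b - x ∈ Set.Icc (-1 : ℝ) 1 → ‖Φ x‖ₑ ≤ S := by
    intro x hx
    have h := hS (x - b) (by rw [abs_sub_comm]; exact abs_le.2 hx)
    rw [intervalIntegral.integral_comp_add_left (fun y => g y) b] at h
    simpa [hΦ, sub_eq_add_neg] using h
  have hmd : ∀ x, HasDerivAt (fun x => moll (b - x)) (-deriv moll (b - x)) x := by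
    intro x
    have h1 : HasDerivAt moll (deriv moll (b - x)) (b - x) :=
      (contDiff_moll.differentiable (by simp)).differentiableAt.hasDerivAt
    exact (h1.comp x ((hasDerivAt_id x).const_sub b)).congr_deriv (by ring)
  have hcs : HasCompactSupport fun x => moll (b - x) := by
    refine HasCompactSupport.intro (isCompact_Icc (a := b - 1) (b := b + 1)) fun x hx => moll_eq_zero ?_
    contrapose! hx
    exact ⟨by linarith [hx.2], by linarith [hx.1]⟩
  have hcs' : HasCompactSupport fun x => deriv moll (b - x) := by
    refine HasCompactSupport.intro (isCompact_Icc (a := b - 1) (b := b + 1)) fun x hx => deriv_moll_eq_zero ?_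
    contrapose! hx
    exact ⟨by linarith [hx.2], by linarith [hx.1]⟩
  have hcm : Continuous fun x => moll (b - x) := continuous_moll.comp (by fun_prop)
  have hcm' : Continuous fun x => deriv moll (b - x) := continuous_deriv_moll.comp (by fun_prop)
  have hint : ∀ c : ℝ → ℝ, Continuous c → HasCompactSupport c → Integrable fun x => c x * ρ x := by
    intro c hc hcc
    obtain ⟨K, hK⟩ := hc.bounded_above_of_compact_support hcc
    exact hρi.bdd_mul hc.aestronglyMeasurable (Filter.Eventually.of_forall hK)
  have hi1 := hint (fun x => g x * moll (b - x)) (hg.continuous.mul hcm) hcs.mul_left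
  have hi2 := hint (fun x => Φ x * deriv moll (b - x)) (hcΦ.continuous.mul hcm') hcs'.mul_left
  have hψ := hμ (fun x => Φ x * moll (b - x)) (hcΦ.mul (contDiff_moll.comp (by fun_prop))) hcs.mul_left
  have hsplit : ∫ x, g x * ρ x * moll (b - x) =
      (∫ x, ρ x * deriv (fun x => Φ x * moll (b - x)) x) + ∫ x, Φ x * deriv moll (b - x) * ρ x := by
    have e : ∀ x, ρ x * deriv (fun x => Φ x * moll (b - x)) x =
        g x * moll (b - x) * ρ x - Φ x * deriv moll (b - x) * ρ x := by
      intro x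
      have h : HasDerivAt (fun x => Φ x * moll (b - x)) _ x := (hdΦ x).mul (hmd x)
      rw [h.deriv]; ring
    simp_rw [e]
    rw [integral_sub hi1 hi2, sub_add_cancel]
    exact integral_congr_ae (Filter.Eventually.of_forall fun x => by ring)
  rw [hsplit, window, mul_add]
  refine (enorm_add_le _ _).trans (add_le_add (hψ.trans ?_) ((enorm_integral_le_lintegral_enorm _).trans ?_))
  · rw [← lintegral_const_mul _ hcm.measurable.enorm]
    refine lintegral_mono fun x => ?_
    rw [enorm_mul]
    by_cases hx : b - x ∈ Set.Icc (-1 : ℝ) 1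
    · gcongr; exact hΦS x hx
    · simp [moll_eq_zero hx]
  · have := hcm'.measurable
    rw [← lintegral_const_mul _ (by fun_prop)]
    refine lintegral_mono fun x => ?_
    simp only [enorm_mul]
    rw [← mul_assoc]
    by_cases hx : b - x ∈ Set.Icc (-1 : ℝ) 1
    · gcongr; exact hΦS x hx
    · simp [deriv_moll_eq_zero hx]

/-- A function of bounded variation is bounded by the weight of the window, in every window. This is the
limit of `enorm_window_le` for functions `g` that approximate the unit mass at `x`. -/
lemma ae_mul_moll_le {μ : Measure ℝ} {ρ : ℝ → ℝ} (hρ : Measurable ρ) (hρi : Integrable ρ)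
    (hμ : ∀ ψ : ℝ → ℝ, ContDiff ℝ (⊤ : ℕ∞) ψ → HasCompactSupport ψ →
      ‖∫ x, ρ x * deriv ψ x‖ₑ ≤ ∫⁻ x, ‖ψ x‖ₑ ∂μ) (b : ℝ) :
    ∀ᵐ x, ‖ρ x * moll (b - x)‖ₑ ≤ window μ ρ b := by
  let β : ℕ → ContDiffBump (0 : ℝ) := fun i =>
    ⟨1 / ((i : ℝ) + 1) / 2, 1 / ((i : ℝ) + 1), by positivity, half_lt_self (by positivity)⟩
  have hloc : LocallyIntegrable (fun x => ρ x * moll (b - x)) := by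
    obtain ⟨K, hK⟩ := continuous_moll.bounded_above_of_compact_support hasCompactSupport_moll
    refine Integrable.locallyIntegrable ?_
    have := hρi.bdd_mul (f := fun x => moll (b - x)) (c := K)
      (continuous_moll.comp (by fun_prop)).aestronglyMeasurable (Filter.Eventually.of_forall fun x => hK _)
    exact this.congr (Filter.Eventually.of_forall fun x => mul_comm _ _)
  have hlim : Filter.Tendsto (fun i => (β i).rOut) Filter.atTop (nhds 0) :=
    tendsto_one_div_add_atTop_nhds_zero_nat
  have := ContDiffBump.ae_convolution_tendsto_right_of_locallyIntegrable (φ := β) (K := 2) hlim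
    (Filter.Eventually.of_forall fun i => by simp only [β]; linarith) hloc
  filter_upwards [this] with x hx
  refine le_of_tendsto hx.enorm (Filter.Eventually.of_forall fun i => ?_)
  rw [convolution_eq_swap]
  have h1 : ∫⁻ t, ‖(β i).normed volume (x - t)‖ₑ = 1 := by
    have h : ∀ t, ‖(β i).normed volume t‖ₑ = ENNReal.ofReal ((β i).normed volume t) := fun t =>
      Real.enorm_of_nonneg (ContDiffBump.nonneg_normed _ _)
    rw [lintegral_sub_left_eq_self (fun t => ‖(β i).normed volume t‖ₑ) x]
    simp_rw [h]
    rw [← ofReal_integral_eq_lintegral_ofReal (ContDiffBump.integrable_normed _)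
      (Filter.Eventually.of_forall fun x => ContDiffBump.nonneg_normed _ _), ContDiffBump.integral_normed,
      ENNReal.ofReal_one]
  have h2 := enorm_window_le hρ hρi hμ (g := fun t => (β i).normed volume (x - t))
    ((ContDiffBump.contDiff_normed _).comp (by fun_prop)) b (S := 1) (fun y hy => ?_)
  · rw [one_mul] at h2
    refine le_trans (le_of_eq ?_) h2
    congr 1
    refine integral_congr_ae (Filter.Eventually.of_forall fun t => ?_)
    simp [mul_assoc]
  · refine (enorm_intervalIntegral_le hy).trans ((setLIntegral_le_lintegral _ _).trans (le_of_eq ?_))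
    rw [lintegral_add_left_eq_self (fun t => ‖(β i).normed volume (x - t)‖ₑ) b, h1]

/-- An average over the windows: up to a constant, a density of bounded variation may be replaced by
uniform densities on intervals of length two, both for size estimates and for oscillatory integrals. -/
lemma exists_windows : ∃ M : ℝ, 1 ≤ M ∧ ∀ ρ : ℝ → ℝ, UnitBV ρ → ∃ W : ℝ → ENNReal, Measurable W ∧
    ∫⁻ b, W b ≤ ENNReal.ofReal M ∧
    (∀ G : ℝ → ENNReal, Measurable G →
      ∫⁻ x, G x * ‖ρ x‖ₑ ≤ ∫⁻ b, (∫⁻ y in Set.Icc (-1 : ℝ) 1, G (b + y)) * W b) ∧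
    (∀ g : ℝ → ℝ, ContDiff ℝ (⊤ : ℕ∞) g → (∃ K, ∀ x, ‖g x‖ ≤ K) → ∀ S : ℝ → ENNReal,
      (∀ b x : ℝ, |x| ≤ 1 → ‖∫ y in (-1 : ℝ)..x, g (b + y)‖ₑ ≤ S b) →
      ‖∫ x, g x * ρ x‖ₑ ≤ ∫⁻ b, S b * W b) := by
  refine ⟨1 + ∫ x, ‖deriv moll x‖, ?_, fun ρ ⟨hρ, hρi, hρ1, μ, hμ1, hμ⟩ => ⟨window μ ρ, ?_⟩⟩
  · have : 0 ≤ ∫ x, ‖deriv moll x‖ := integral_nonneg fun x => norm_nonneg _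
    linarith
  have : IsFiniteMeasure μ := ⟨hμ1.trans_lt ENNReal.one_lt_top⟩
  have hm := continuous_moll.measurable
  refine ⟨measurable_window hρ, (lintegral_window hμ1 hρ hρ1).trans (le_of_eq ?_), fun G hG => ?_,
    fun g hg ⟨K, hK⟩ S hS => ?_⟩
  · rw [ENNReal.ofReal_add zero_le_one (integral_nonneg fun x => norm_nonneg _), ENNReal.ofReal_one,
      ofReal_integral_norm_eq_lintegral_enorm integrable_deriv_moll]
  · calc ∫⁻ x, G x * ‖ρ x‖ₑ = ∫⁻ x, ∫⁻ b, G x * ‖ρ x * moll (b - x)‖ₑ := by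
          refine lintegral_congr fun x => ?_
          simp_rw [enorm_mul, ← mul_assoc]
          rw [lintegral_const_mul _ (by fun_prop), lintegral_sub_right_eq_self (fun b => ‖moll b‖ₑ) x,
            lintegral_moll, mul_one]
      _ = ∫⁻ b, ∫⁻ x, G x * ‖ρ x * moll (b - x)‖ₑ := lintegral_lintegral_swap (by fun_prop)
      _ ≤ ∫⁻ b, ∫⁻ x, (Set.Icc (-1 : ℝ) 1).indicator (fun _ => G x) (x - b) * window μ ρ b := by
          refine lintegral_mono fun b => lintegral_mono_ae ?_
          filter_upwards [ae_mul_moll_le hρ hρi hμ b] with x hx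
          by_cases h : x - b ∈ Set.Icc (-1 : ℝ) 1
          · rw [Set.indicator_of_mem h]; gcongr
          · have : b - x ∉ Set.Icc (-1 : ℝ) 1 := fun h' => h ⟨by linarith [h'.2], by linarith [h'.1]⟩
            simp [moll_eq_zero this]
      _ = _ := by
          refine lintegral_congr fun b => ?_
          have hmeas : Measurable fun x => (Set.Icc (-1 : ℝ) 1).indicator (fun _ => G x) (x - b) := by
            have e : (fun x => (Set.Icc (-1 : ℝ) 1).indicator (fun _ => G x) (x - b)) =
                ((fun x => x - b) ⁻¹' Set.Icc (-1 : ℝ) 1).indicator G := by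
              ext x; simp [Set.indicator, add_comm]
            rw [e]
            exact hG.indicator (measurableSet_Icc.preimage (by fun_prop))
          rw [lintegral_mul_const _ hmeas, ← lintegral_indicator measurableSet_Icc,
            ← lintegral_add_left_eq_self _ b]
          congr 1
          refine lintegral_congr fun y => ?_
          simp [Set.indicator]
  · have hgi : Integrable fun x => g x * ρ x :=
      hρi.bdd_mul hg.continuous.aestronglyMeasurable (Filter.Eventually.of_forall hK)
    have hprod : Integrable (Function.uncurry fun b x => g x * ρ x * moll (b - x)) (volume.prod volume) :=
      hgi.convolution_integrand (ContinuousLinearMap.mul ℝ ℝ) integrable_moll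
    have e : ∫ x, g x * ρ x = ∫ b, ∫ x, g x * ρ x * moll (b - x) := by
      rw [integral_integral_swap hprod]
      refine integral_congr_ae (Filter.Eventually.of_forall fun x => ?_)
      simp only
      rw [integral_const_mul, integral_sub_right_eq_self moll x, integral_moll, mul_one]
    rw [e]
    refine (enorm_integral_le_lintegral_enorm _).trans (lintegral_mono fun b => ?_)
    exact enorm_window_le hρ hρi hμ hg b (hS b)

/-! ### Slices of polynomials in many variables -/

/-- The coefficient of `y ^ j` in `f(b + y, x₁, …, x_n)`, a polynomial in `x₁, …, x_n`. -/
def slice {n : ℕ} (f : MvPolynomial (Fin (n + 1)) ℝ) (b : ℝ) (j : ℕ) : MvPolynomial (Fin n) ℝ :=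
  (Polynomial.taylor (MvPolynomial.C b) (MvPolynomial.finSuccEquiv ℝ n f)).coeff j

/-- The polynomial `y ↦ f(b + y, x₁, …, x_n)`. -/
def fiber {n : ℕ} (f : MvPolynomial (Fin (n + 1)) ℝ) (b : ℝ) (x : Fin n → ℝ) : Polynomial ℝ :=
  (Polynomial.taylor (MvPolynomial.C b) (MvPolynomial.finSuccEquiv ℝ n f)).map (MvPolynomial.eval x)

lemma coeff_fiber {n : ℕ} (f : MvPolynomial (Fin (n + 1)) ℝ) (b : ℝ) (x : Fin n → ℝ) (j : ℕ) :
    (fiber f b x).coeff j = MvPolynomial.eval x (slice f b j) := by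
  rw [fiber, Polynomial.coeff_map]; rfl

lemma eval_fiber {n : ℕ} (f : MvPolynomial (Fin (n + 1)) ℝ) (b : ℝ) (x : Fin n → ℝ) (y : ℝ) :
    (fiber f b x).eval y = MvPolynomial.eval (Fin.cons (b + y) x : Fin (n + 1) → ℝ) f := by
  rw [MvPolynomial.eval_eq_eval_mv_eval', fiber, Polynomial.map_taylor, Polynomial.taylor_eval,
    MvPolynomial.eval_C, add_comm]

lemma eval_slice_zero {n : ℕ} (f : MvPolynomial (Fin (n + 1)) ℝ) (b : ℝ) (x : Fin n → ℝ) :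
    MvPolynomial.eval x (slice f b 0) = MvPolynomial.eval (Fin.cons b x : Fin (n + 1) → ℝ) f := by
  rw [← coeff_fiber, Polynomial.coeff_zero_eq_eval_zero, eval_fiber, add_zero]

lemma slice_eq_sum {n : ℕ} (f : MvPolynomial (Fin (n + 1)) ℝ) (b : ℝ) (j : ℕ) :
    slice f b j = ∑ i ∈ (MvPolynomial.finSuccEquiv ℝ n f).support,
      MvPolynomial.C (i.choose j * b ^ (i - j)) * (MvPolynomial.finSuccEquiv ℝ n f).coeff i := by
  rw [slice, Polynomial.taylor_coeff, Polynomial.hasseDeriv_apply, Polynomial.sum_def,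
    Polynomial.eval_finsetSum]
  refine Finset.sum_congr rfl fun i _ => ?_
  rw [Polynomial.eval_monomial, map_mul, map_pow, map_natCast]
  ring

lemma continuous_eval_slice {n : ℕ} (f : MvPolynomial (Fin (n + 1)) ℝ) (j : ℕ) :
    Continuous fun p : ℝ × (Fin n → ℝ) => MvPolynomial.eval p.2 (slice f p.1 j) := by
  simp_rw [slice_eq_sum, map_sum, map_mul, MvPolynomial.eval_C]
  refine continuous_finsetSum _ fun i _ => ?_
  exact (by fun_prop : Continuous fun p : ℝ × (Fin n → ℝ) => (i.choose j : ℝ) * p.1 ^ (i - j)).mul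
    ((MvPolynomial.continuous_eval _).comp continuous_snd)

lemma coeff_slice {n : ℕ} (f : MvPolynomial (Fin (n + 1)) ℝ) (b : ℝ) (j : ℕ) (u : Fin n →₀ ℕ) :
    (slice f b j).coeff u = ∑ i ∈ (MvPolynomial.finSuccEquiv ℝ n f).support,
      i.choose j * b ^ (i - j) * f.coeff (u.cons i) := by
  rw [slice_eq_sum, MvPolynomial.coeff_sum]
  refine Finset.sum_congr rfl fun i _ => ?_
  rw [MvPolynomial.coeff_C_mul, MvPolynomial.finSuccEquiv_coeff_coeff]

/-- Total degree at most `k` and individual degrees at most `m`, that is, membership in `𝒫_{k,m}`. -/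
def Adm (m k : ℕ) {n : ℕ} (f : MvPolynomial (Fin n) ℝ) : Prop :=
  ∀ v, f.coeff v ≠ 0 → (∀ i, v i ≤ m) ∧ ∑ i, v i ≤ k

lemma sum_cons {n : ℕ} (i : ℕ) (u : Fin n →₀ ℕ) : ∑ l, (u.cons i) l = i + ∑ l, u l := by
  rw [Fin.sum_univ_succ, Finsupp.cons_zero]
  simp

lemma Adm.slice {m k n : ℕ} {f : MvPolynomial (Fin (n + 1)) ℝ} (hf : Adm m k f) (b : ℝ) (j : ℕ) :
    Adm m (k - j) (slice f b j) := by
  intro v hv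
  rw [coeff_slice] at hv
  obtain ⟨i, -, hi⟩ := Finset.exists_ne_zero_of_sum_ne_zero hv
  have hij : j ≤ i := by
    by_contra h
    exact hi (by rw [Nat.choose_eq_zero_of_lt (by omega)]; simp)
  obtain ⟨h1, h2⟩ := hf _ (right_ne_zero_of_mul hi)
  rw [sum_cons] at h2
  refine ⟨fun l => ?_, by omega⟩
  simpa using h1 l.succ

/-- The leading coefficients of a slice do not depend on the point `b`. -/
lemma Adm.coeff_slice {m k n : ℕ} {f : MvPolynomial (Fin (n + 1)) ℝ} (hf : Adm m k f) (b : ℝ) {j : ℕ}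
    {u : Fin n →₀ ℕ} (hu : j + ∑ l, u l = k) : (_root_.slice f b j).coeff u = f.coeff (u.cons j) := by
  rw [_root_.coeff_slice, Finset.sum_eq_single j]
  · simp
  · intro i _ hij
    rcases lt_or_gt_of_ne hij with h | h
    · rw [Nat.choose_eq_zero_of_lt h]; simp
    · rw [show f.coeff (u.cons i) = 0 by
        by_contra h0
        have := (hf _ h0).2
        rw [sum_cons] at this
        omega, mul_zero]
  · intro h
    rw [Polynomial.notMem_support_iff] at h
    rw [← MvPolynomial.finSuccEquiv_coeff_coeff, h]; simp

lemma Adm.natDegree_fiber {m k n : ℕ} {f : MvPolynomial (Fin (n + 1)) ℝ} (hf : Adm m k f) (b : ℝ)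
    (x : Fin n → ℝ) : (fiber f b x).natDegree ≤ m ∧ (fiber f b x).natDegree ≤ k := by
  have h : (fiber f b x).natDegree ≤ MvPolynomial.degreeOf 0 f := by
    rw [fiber]
    refine Polynomial.natDegree_map_le.trans ?_
    rw [Polynomial.natDegree_taylor, MvPolynomial.natDegree_finSuccEquiv]
  constructor
  · refine h.trans (MvPolynomial.degreeOf_le_iff.2 fun v hv => ?_)
    exact (hf v (MvPolynomial.mem_support_iff.1 hv)).1 0
  · refine h.trans (MvPolynomial.degreeOf_le_iff.2 fun v hv => ?_)
    exact (Finset.single_le_sum (f := fun i => v i) (fun _ _ => Nat.zero_le _) (Finset.mem_univ 0)).trans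
      (hf v (MvPolynomial.mem_support_iff.1 hv)).2

/-! ### The sublevel-set estimate in many variables -/

lemma lintegral_fin_succ {n : ℕ} {H : (Fin (n + 1) → ℝ) → ENNReal} (hH : Measurable H) :
    ∫⁻ x, H x = ∫⁻ x₀ : ℝ, ∫⁻ x : Fin n → ℝ, H (Fin.cons x₀ x) := by
  have h := (volume_preserving_piFinSuccAbove (fun _ : Fin (n + 1) => ℝ) 0).symm
  rw [← h.lintegral_comp_emb (MeasurableEquiv.measurableEmbedding _) H, Measure.volume_eq_prod, lintegral_prod]
  · simp [MeasurableEquiv.piFinSuccAbove_symm_apply, Fin.insertNthEquiv]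
  · exact (hH.comp (MeasurableEquiv.measurable _)).aemeasurable

lemma integral_fin_succ {n : ℕ} {H : (Fin (n + 1) → ℝ) → ℝ} (hH : Integrable H) :
    (∫ x, H x = ∫ x₀ : ℝ, ∫ x : Fin n → ℝ, H (Fin.cons x₀ x)) ∧
      (∫ x, H x = ∫ x : Fin n → ℝ, ∫ x₀ : ℝ, H (Fin.cons x₀ x)) := by
  have h := (volume_preserving_piFinSuccAbove (fun _ : Fin (n + 1) => ℝ) 0).symm
  have hi : Integrable (fun z => H ((MeasurableEquiv.piFinSuccAbove (fun _ : Fin (n + 1) => ℝ) 0).symm z))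
      volume := h.integrable_comp_of_integrable hH
  rw [Measure.volume_eq_prod] at hi
  rw [← h.integral_comp' H, Measure.volume_eq_prod]
  constructor
  · rw [integral_prod _ hi]
    simp [MeasurableEquiv.piFinSuccAbove_symm_apply, Fin.insertNthEquiv]
  · rw [integral_prod_symm _ hi]
    simp [MeasurableEquiv.piFinSuccAbove_symm_apply, Fin.insertNthEquiv]

lemma continuous_eval_cons {n : ℕ} (f : MvPolynomial (Fin (n + 1)) ℝ) :
    Continuous fun p : ℝ × (Fin n → ℝ) => MvPolynomial.eval (Fin.cons p.1 p.2 : Fin (n + 1) → ℝ) f := by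
  simp_rw [← eval_slice_zero]
  exact continuous_eval_slice f 0

lemma measurable_prod_enorm {n : ℕ} {ρ : Fin n → ℝ → ℝ} (hρ : ∀ j, UnitBV (ρ j)) :
    Measurable fun x : Fin n → ℝ => ∏ j, ‖ρ j (x j)‖ₑ :=
  Finset.measurable_prod _ fun j _ => ((hρ j).1.comp (measurable_pi_apply j)).enorm

/-- One integration: a logarithm is lost only in degree `m`. -/
lemma exists_lintegral_step {m : ℕ} (hm : 0 < m) : ∃ C : ℝ, 1 ≤ C ∧ ∀ {B : ℝ}, 2 ≤ B →
    ∀ {r : ℕ}, (r : ℝ) ≤ B → ∀ (k : ℕ) (p : Polynomial ℝ), p.natDegree ≤ m → p.natDegree ≤ k → ∀ j,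
      ∫⁻ x in Set.Icc (-1 : ℝ) 1, ENNReal.ofReal (decay m B r (p.eval x)) ≤
        ENNReal.ofReal (C * decay m B (if m ≤ k then r + 1 else r) (p.coeff j)) := by
  obtain ⟨C, hC, h⟩ := exists_lintegral_decay hm
  refine ⟨12 * (m + 1) + C, ?_, fun {B} hB {r} hr k p hp hk j => ?_⟩
  · have : (0 : ℝ) ≤ m := Nat.cast_nonneg m
    linarith
  have hB0 : 0 ≤ B := by linarith
  split_ifs with hmk
  · refine (lintegral_decay_log hm hB hr p hp j).trans (ENNReal.ofReal_le_ofReal ?_)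
    exact mul_le_mul_of_nonneg_right (by linarith) (decay_nonneg hB0 _ _)
  · refine (h hB hr p (by omega) j).trans (ENNReal.ofReal_le_ofReal ?_)
    have : (0 : ℝ) ≤ m := Nat.cast_nonneg m
    exact mul_le_mul_of_nonneg_right (by linarith) (decay_nonneg hB0 _ _)

/-- Sublevel-set estimate in many variables, by induction on the dimension: a variable that does not occur
in the leading monomial `u` is frozen, any other one is integrated out, which lowers the degree. Only a
polynomial of degree at least `m` costs a logarithm, hence at most `k + 1 - m` of them arise. -/
lemma exists_lintegral_decay_pi {m : ℕ} (hm : 0 < m) : ∃ Q : ℝ, 1 ≤ Q ∧ ∀ {B : ℝ}, 2 ≤ B → ∀ (n k r : ℕ),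
    ((r + (k + 1 - m) : ℕ) : ℝ) ≤ B → ∀ ρ : Fin n → ℝ → ℝ, (∀ j, UnitBV (ρ j)) →
    ∀ f : MvPolynomial (Fin n) ℝ, Adm m k f → ∀ u : Fin n →₀ ℕ, ∑ i, u i = k →
      ∫⁻ x, ENNReal.ofReal (decay m B r (MvPolynomial.eval x f)) * ∏ j, ‖ρ j (x j)‖ₑ ≤
        ENNReal.ofReal (Q ^ k * decay m B (r + (k + 1 - m)) (f.coeff u)) := by
  obtain ⟨M, hM, hW⟩ := exists_windows
  obtain ⟨C, hC, hstep⟩ := exists_lintegral_step hm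
  refine ⟨M * C, one_le_mul_of_one_le_of_one_le hM hC, fun {B} hB n => ?_⟩
  have hB0 : 0 ≤ B := by linarith
  have hQ : 1 ≤ M * C := one_le_mul_of_one_le_of_one_le hM hC
  induction n with
  | zero =>
    intro k r _ ρ _ f _ u hu
    obtain rfl : k = 0 := by simpa using hu.symm
    have e : ∀ x : Fin 0 → ℝ, MvPolynomial.eval x f = f.coeff u := fun x => by
      rw [MvPolynomial.eq_C_of_isEmpty f, MvPolynomial.eval_C, Subsingleton.elim u 0]; simp
    simp only [e, Finset.univ_eq_empty, Finset.prod_empty, mul_one, lintegral_const]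
    rw [show r + (0 + 1 - m) = r by omega, volume_pi, Measure.pi_univ]
    simp
  | succ n ih =>
    intro k r hr ρ hρ f hf u hu
    obtain ⟨hρm, hρi, hρ1, -⟩ := hρ 0
    have hρ' : ∀ j : Fin n, UnitBV (ρ j.succ) := fun j => hρ _
    have hPm := measurable_prod_enorm hρ'
    set P : (Fin n → ℝ) → ENNReal := fun x => ∏ j : Fin n, ‖ρ j.succ (x j)‖ₑ with hP
    have hfc := continuous_eval_cons f
    have hdm : Continuous (decay m B r) := by fun_prop
    have hHm : Measurable fun x : Fin (n + 1) → ℝ =>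
        ENNReal.ofReal (decay m B r (MvPolynomial.eval x f)) * ∏ j, ‖ρ j (x j)‖ₑ :=
      ((hdm.comp (MvPolynomial.continuous_eval f)).measurable.ennreal_ofReal).mul
        (measurable_prod_enorm hρ)
    rw [lintegral_fin_succ hHm]
    simp_rw [Fin.prod_univ_succ, Fin.cons_zero, Fin.cons_succ]
    have hu' : u 0 + ∑ i, u.tail i = k := by
      rw [← hu, Fin.sum_univ_succ]; simp [Finsupp.tail_apply]
    rcases Nat.eq_zero_or_pos (u 0) with h0 | h0
    · calc _ ≤ ∫⁻ x₀, ‖ρ 0 x₀‖ₑ * ENNReal.ofReal ((M * C) ^ k * decay m B (r + (k + 1 - m)) (f.coeff u)) := by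
            refine lintegral_mono fun x₀ => ?_
            have h := ih k r hr _ hρ' (slice f x₀ 0) (hf.slice x₀ 0) u.tail (by omega)
            rw [hf.coeff_slice x₀ (by omega), ← h0, Finsupp.cons_tail] at h
            refine le_trans (le_of_eq ?_) (mul_le_mul_right h _)
            have hmeas : Measurable fun x : Fin n → ℝ =>
                ENNReal.ofReal (decay m B r (MvPolynomial.eval x (slice f x₀ 0))) * P x :=
              ((hdm.comp (MvPolynomial.continuous_eval _)).measurable.ennreal_ofReal).mul hPm
            rw [h0, ← lintegral_const_mul _ hmeas]
            refine lintegral_congr fun x => ?_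
            rw [eval_slice_zero, hP]; ring
        _ = _ := by rw [lintegral_mul_const _ (by fun_prop), hρ1, one_mul]
    · set s := if m ≤ k then r + 1 else r with hs
      have hs1 : s + (k - u 0 + 1 - m) ≤ r + (k + 1 - m) := by rw [hs]; split_ifs <;> omega
      have hr1 : (r : ℝ) ≤ B := le_trans (by exact_mod_cast Nat.le_add_right _ _) hr
      obtain ⟨W, hWm, hW1, hW2, -⟩ := hW (ρ 0) (hρ 0)
      have hsl := continuous_eval_slice f (u 0)
      have hsm : Measurable fun p : ℝ × (Fin n → ℝ) =>
          ENNReal.ofReal (C * decay m B s (MvPolynomial.eval p.2 (slice f p.1 (u 0)))) := by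
        have : Continuous (decay m B s) := by fun_prop
        exact (continuous_const.mul (this.comp hsl)).measurable.ennreal_ofReal
      have hfm : Measurable fun p : ℝ × (Fin n → ℝ) =>
          ENNReal.ofReal (decay m B r (MvPolynomial.eval (Fin.cons p.1 p.2 : Fin (n + 1) → ℝ) f)) :=
        (hdm.comp hfc).measurable.ennreal_ofReal
      calc _ = ∫⁻ x : Fin n → ℝ, P x * ∫⁻ x₀, ENNReal.ofReal (decay m B r
              (MvPolynomial.eval (Fin.cons x₀ x : Fin (n + 1) → ℝ) f)) * ‖ρ 0 x₀‖ₑ := by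
            rw [lintegral_lintegral_swap]
            · refine lintegral_congr fun x => ?_
              have : Measurable fun x₀ : ℝ => ENNReal.ofReal (decay m B r
                  (MvPolynomial.eval (Fin.cons x₀ x : Fin (n + 1) → ℝ) f)) * ‖ρ 0 x₀‖ₑ :=
                (hfm.comp (measurable_id.prodMk measurable_const)).mul hρm.enorm
              rw [← lintegral_const_mul _ this]
              refine lintegral_congr fun x₀ => ?_
              rw [hP]; ring
            · exact (hfm.mul ((hρm.comp measurable_fst).enorm.mul (hPm.comp measurable_snd))).aemeasurable
        _ ≤ ∫⁻ x : Fin n → ℝ, P x * ∫⁻ b, ENNReal.ofReal (C * decay m B s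
              (MvPolynomial.eval x (slice f b (u 0)))) * W b := by
            refine lintegral_mono fun x => mul_le_mul_right ?_ _
            refine (hW2 _ (hfm.comp (measurable_id.prodMk measurable_const))).trans
              (lintegral_mono fun b => mul_le_mul_left ?_ _)
            have h := hstep hB hr1 k (fiber f b x) (hf.natDegree_fiber b x).1 (hf.natDegree_fiber b x).2 (u 0)
            simp_rw [eval_fiber, coeff_fiber] at h
            exact h
        _ = ∫⁻ b, W b * (ENNReal.ofReal C * ∫⁻ x : Fin n → ℝ, ENNReal.ofReal (decay m B s
              (MvPolynomial.eval x (slice f b (u 0)))) * P x) := by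
            have hX : Measurable fun p : (Fin n → ℝ) × ℝ => ENNReal.ofReal (C * decay m B s
                (MvPolynomial.eval p.1 (slice f p.2 (u 0)))) * W p.2 :=
              (hsm.comp measurable_swap).mul (hWm.comp measurable_snd)
            have h1 : ∀ x : Fin n → ℝ, P x * ∫⁻ b, ENNReal.ofReal (C * decay m B s
                (MvPolynomial.eval x (slice f b (u 0)))) * W b =
                ∫⁻ b, P x * (ENNReal.ofReal (C * decay m B s
                (MvPolynomial.eval x (slice f b (u 0)))) * W b) := fun x =>
              (lintegral_const_mul _ (hX.comp (measurable_const.prodMk measurable_id))).symm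
            simp_rw [h1]
            rw [lintegral_lintegral_swap ((hPm.comp measurable_fst).mul hX).aemeasurable]
            refine lintegral_congr fun b => ?_
            have hsd : Continuous (decay m B s) := by fun_prop
            have h2 : Measurable fun x : Fin n → ℝ => ENNReal.ofReal (decay m B s
                (MvPolynomial.eval x (slice f b (u 0)))) * P x :=
              ((hsd.comp (MvPolynomial.continuous_eval _)).measurable.ennreal_ofReal).mul hPm
            rw [← lintegral_const_mul _ h2, ← lintegral_const_mul _ (h2.const_mul _)]
            refine lintegral_congr fun x => ?_
            rw [ENNReal.ofReal_mul (by linarith)]; ring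
        _ ≤ ∫⁻ b, W b * (ENNReal.ofReal C * ENNReal.ofReal ((M * C) ^ (k - u 0) *
              decay m B (s + (k - u 0 + 1 - m)) (f.coeff u))) := by
            refine lintegral_mono fun b => mul_le_mul_right (mul_le_mul_right ?_ _) _
            have h := ih (k - u 0) s (le_trans (by exact_mod_cast hs1) hr) _ hρ' (slice f b (u 0))
              (hf.slice b (u 0)) u.tail (by omega)
            rwa [hf.coeff_slice b hu', Finsupp.cons_tail] at h
        _ ≤ ENNReal.ofReal M * (ENNReal.ofReal C * ENNReal.ofReal ((M * C) ^ (k - u 0) *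
              decay m B (s + (k - u 0 + 1 - m)) (f.coeff u))) := by
            rw [lintegral_mul_const _ hWm]
            exact mul_le_mul_left hW1 _
        _ ≤ _ := by
            rw [← ENNReal.ofReal_mul (by linarith), ← ENNReal.ofReal_mul (by linarith)]
            refine ENNReal.ofReal_le_ofReal ?_
            have hd := decay_mono_r (m := m) (B := B) (by linarith) hs1 (f.coeff u)
            have hd0 := decay_nonneg (m := m) hB0 (r + (k + 1 - m)) (f.coeff u)
            calc _ = (M * C) ^ (k - u 0 + 1) * decay m B (s + (k - u 0 + 1 - m)) (f.coeff u) := by ring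
              _ ≤ (M * C) ^ (k - u 0 + 1) * decay m B (r + (k + 1 - m)) (f.coeff u) := by
                  gcongr
              _ ≤ _ := by
                  refine mul_le_mul_of_nonneg_right (pow_le_pow_right₀ hQ ?_) hd0
                  omega

/-! ### The oscillatory integral in many variables -/

/-- The oscillatory integral at scale `t = 1`. Variables outside the leading monomial are frozen; the first
other one is integrated by the van der Corput estimate, and the remaining ones are treated as a
sublevel-set estimate for the coefficient that appears. -/
lemma exists_oscillatory_pi {m : ℕ} (hm : 0 < m) : ∃ Q A : ℝ, 1 ≤ Q ∧ 1 ≤ A ∧ ∀ {B : ℝ}, 2 ≤ B →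
    ∀ {φ : ℝ → ℝ}, ContDiff ℝ (⊤ : ℕ∞) φ → (∀ x, |deriv φ x| ≤ 1) → (∀ x, |φ x| ≤ 1) →
    ∀ (n k : ℕ), 0 < k → (k : ℝ) ≤ B → ∀ ρ : Fin n → ℝ → ℝ, (∀ j, UnitBV (ρ j)) →
    ∀ f : MvPolynomial (Fin n) ℝ, Adm m k f → ∀ u : Fin n →₀ ℕ, ∑ i, u i = k →
      ‖∫ x, deriv φ (MvPolynomial.eval x f) * ∏ j, ρ j (x j)‖ₑ ≤
        ENNReal.ofReal (A * Q ^ k * decay m B (k - m) (f.coeff u)) := by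
  obtain ⟨M, hM, hW⟩ := exists_windows
  obtain ⟨Q, hQ, hpi⟩ := exists_lintegral_decay_pi hm
  set V : ℝ := 3 + 4 * m + 20 * m * 9 ^ m with hV
  have hV1 : 1 ≤ V := by
    have : (0 : ℝ) ≤ 4 * m + 20 * m * 9 ^ m := by positivity
    linarith
  refine ⟨Q, M * V, hQ, one_le_mul_of_one_le_of_one_le hM hV1, fun {B} hB {φ} hφ hφ' hφ1 n => ?_⟩
  have hB0 : 0 ≤ B := by linarith
  have hcφ' : Continuous (deriv φ) := hφ.continuous_deriv (by simp)
  have hsφ' : ContDiff ℝ (⊤ : ℕ∞) (deriv φ) := (contDiff_infty_iff_deriv.1 hφ).2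
  induction n with
  | zero =>
    intro k hk _ ρ _ f _ u hu
    simp at hu; omega
  | succ n ih =>
    intro k hk hkB ρ hρ f hf u hu
    obtain ⟨hρm, hρi, hρ1, -⟩ := hρ 0
    have hρ' : ∀ j : Fin n, UnitBV (ρ j.succ) := fun j => hρ _
    have hPm := measurable_prod_enorm hρ'
    set P : (Fin n → ℝ) → ENNReal := fun x => ∏ j : Fin n, ‖ρ j.succ (x j)‖ₑ with hP
    have hPe : ∀ x : Fin n → ℝ, ‖∏ j : Fin n, ρ j.succ (x j)‖ₑ = P x := fun x => by
      simp only [hP, enorm, nnnorm_prod, ENNReal.ofNNReal_finsetProd]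
    have hint : Integrable fun x : Fin (n + 1) → ℝ => deriv φ (MvPolynomial.eval x f) * ∏ j, ρ j (x j) := by
      have h1 : Integrable fun x : Fin (n + 1) → ℝ => ∏ j, ρ j (x j) :=
        Integrable.fintype_prod fun j => (hρ j).2.1
      exact h1.bdd_mul (hcφ'.comp (MvPolynomial.continuous_eval f)).aestronglyMeasurable
        (Filter.Eventually.of_forall fun x => hφ' _)
    have hu' : u 0 + ∑ i, u.tail i = k := by
      rw [← hu, Fin.sum_univ_succ]; simp [Finsupp.tail_apply]
    rcases Nat.eq_zero_or_pos (u 0) with h0 | h0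
    · rw [(integral_fin_succ hint).1]
      refine (enorm_integral_le_lintegral_enorm _).trans ?_
      calc _ ≤ ∫⁻ x₀, ‖ρ 0 x₀‖ₑ * ENNReal.ofReal (M * V * Q ^ k * decay m B (k - m) (f.coeff u)) := by
            refine lintegral_mono fun x₀ => ?_
            have h := ih k hk hkB _ hρ' (slice f x₀ 0) (hf.slice x₀ 0) u.tail (by omega)
            rw [hf.coeff_slice x₀ (by omega), ← h0, Finsupp.cons_tail] at h
            refine le_trans (le_of_eq ?_) (mul_le_mul_right h _)
            rw [← enorm_mul, ← integral_const_mul]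
            congr 1
            refine integral_congr_ae (Filter.Eventually.of_forall fun x => ?_)
            simp only [Fin.prod_univ_succ, Fin.cons_zero, Fin.cons_succ]
            rw [h0, eval_slice_zero]; ring
        _ = _ := by rw [lintegral_mul_const _ (by fun_prop), hρ1, one_mul]
    · obtain ⟨W, hWm, hW1, -, hW2⟩ := hW (ρ 0) (hρ 0)
      have hsl := continuous_eval_slice f (u 0)
      have hsd : Continuous (decay m B 0) := by fun_prop
      have hsm : Measurable fun p : ℝ × (Fin n → ℝ) =>
          ENNReal.ofReal (V * decay m B 0 (MvPolynomial.eval p.2 (slice f p.1 (u 0)))) :=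
        (continuous_const.mul (hsd.comp hsl)).measurable.ennreal_ofReal
      rw [(integral_fin_succ hint).2]
      refine (enorm_integral_le_lintegral_enorm _).trans ?_
      calc _ ≤ ∫⁻ x : Fin n → ℝ, P x * ∫⁻ b, ENNReal.ofReal (V * decay m B 0
              (MvPolynomial.eval x (slice f b (u 0)))) * W b := by
            refine lintegral_mono fun x => ?_
            have h := hW2 (fun x₀ => deriv φ ((fiber f 0 x).eval x₀))
              (hsφ'.comp (by simpa using (fiber f 0 x).contDiff_aeval (𝕜 := ℝ) _)) ⟨1, fun _ => hφ' _⟩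
              (fun b => ENNReal.ofReal (V * decay m B 0 (MvPolynomial.eval x (slice f b (u 0)))))
              (fun b y hy => ?_)
            · refine le_trans (le_of_eq ?_) (mul_le_mul_right h _)
              rw [← hPe, ← enorm_mul, ← integral_const_mul]
              congr 1
              refine integral_congr_ae (Filter.Eventually.of_forall fun x₀ => ?_)
              simp only [Fin.prod_univ_succ, Fin.cons_zero, Fin.cons_succ, eval_fiber, zero_add]
              ring
            · have h := van_der_corput hm B (fiber f b x) (hf.natDegree_fiber b x).1 h0 hφ hφ' hφ1 hy
              simp_rw [eval_fiber, coeff_fiber] at h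
              simp_rw [eval_fiber, zero_add]
              exact h
        _ = ∫⁻ b, W b * (ENNReal.ofReal V * ∫⁻ x : Fin n → ℝ, ENNReal.ofReal (decay m B 0
              (MvPolynomial.eval x (slice f b (u 0)))) * P x) := by
            have hX : Measurable fun p : (Fin n → ℝ) × ℝ => ENNReal.ofReal (V * decay m B 0
                (MvPolynomial.eval p.1 (slice f p.2 (u 0)))) * W p.2 :=
              (hsm.comp measurable_swap).mul (hWm.comp measurable_snd)
            have h1 : ∀ x : Fin n → ℝ, P x * ∫⁻ b, ENNReal.ofReal (V * decay m B 0
                (MvPolynomial.eval x (slice f b (u 0)))) * W b =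
                ∫⁻ b, P x * (ENNReal.ofReal (V * decay m B 0
                (MvPolynomial.eval x (slice f b (u 0)))) * W b) := fun x =>
              (lintegral_const_mul _ (hX.comp (measurable_const.prodMk measurable_id))).symm
            simp_rw [h1]
            rw [lintegral_lintegral_swap ((hPm.comp measurable_fst).mul hX).aemeasurable]
            refine lintegral_congr fun b => ?_
            have h2 : Measurable fun x : Fin n → ℝ => ENNReal.ofReal (decay m B 0
                (MvPolynomial.eval x (slice f b (u 0)))) * P x :=
              ((hsd.comp (MvPolynomial.continuous_eval _)).measurable.ennreal_ofReal).mul hPm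
            rw [← lintegral_const_mul _ h2, ← lintegral_const_mul _ (h2.const_mul _)]
            refine lintegral_congr fun x => ?_
            rw [ENNReal.ofReal_mul (by linarith)]; ring
        _ ≤ ∫⁻ b, W b * (ENNReal.ofReal V * ENNReal.ofReal (Q ^ (k - u 0) *
              decay m B (0 + (k - u 0 + 1 - m)) (f.coeff u))) := by
            refine lintegral_mono fun b => mul_le_mul_right (mul_le_mul_right ?_ _) _
            have h := hpi hB n (k - u 0) 0 (le_trans (Nat.cast_le.2 (by omega)) hkB) _ hρ' (slice f b (u 0))
              (hf.slice b (u 0)) u.tail (by omega)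
            rwa [hf.coeff_slice b hu', Finsupp.cons_tail] at h
        _ ≤ ENNReal.ofReal M * (ENNReal.ofReal V * ENNReal.ofReal (Q ^ (k - u 0) *
              decay m B (0 + (k - u 0 + 1 - m)) (f.coeff u))) := by
            rw [lintegral_mul_const _ hWm]
            exact mul_le_mul_left hW1 _
        _ ≤ _ := by
            rw [← ENNReal.ofReal_mul (by linarith), ← ENNReal.ofReal_mul (by linarith)]
            refine ENNReal.ofReal_le_ofReal ?_
            have hd := decay_mono_r (m := m) (B := B) (by linarith)
              (show 0 + (k - u 0 + 1 - m) ≤ k - m by omega) (f.coeff u)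
            have hd0 := decay_nonneg (m := m) hB0 (0 + (k - u 0 + 1 - m)) (f.coeff u)
            have hp : Q ^ (k - u 0) ≤ Q ^ k := pow_le_pow_right₀ hQ (Nat.sub_le _ _)
            calc _ = M * V * Q ^ (k - u 0) * decay m B (0 + (k - u 0 + 1 - m)) (f.coeff u) := by ring
              _ ≤ _ := by gcongr

/-! ### Normalization by dilations -/

lemma totalVariation_univ (s : SignedMeasure ℝ) :
    s.totalVariation Set.univ = ENNReal.ofReal (sTV s) := by
  rw [sTV, ENNReal.ofReal_toReal]
  rw [SignedMeasure.totalVariation, Measure.add_apply]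
  exact ENNReal.add_ne_top.2 ⟨measure_ne_top _ _, measure_ne_top _ _⟩

lemma enorm_sInt_le (s : SignedMeasure ℝ) {ψ : ℝ → ℝ} :
    ‖sInt s ψ‖ₑ ≤ ∫⁻ x, ‖ψ x‖ₑ ∂s.totalVariation := by
  rw [sInt, SignedMeasure.totalVariation, lintegral_add_measure]
  exact (enorm_sub_le).trans (add_le_add (enorm_integral_le_lintegral_enorm _)
    (enorm_integral_le_lintegral_enorm _))

/-- A dilation reduces a density of bounded variation to one of total variation at most one, and the
density is replaced by a Borel representative. -/
lemma unitBV_dilate {ρ : ℝ → ℝ} {D : SignedMeasure ℝ} (hi : Integrable ρ) (h1 : ∫ x, |ρ x| = 1)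
    (hD : ∀ ψ : ℝ → ℝ, ContDiff ℝ (⊤ : ℕ∞) ψ → HasCompactSupport ψ →
      (∫ x, ρ x * deriv ψ x) = - sInt D ψ) {h : ℝ} (hh : 0 < h) (hTV : h * sTV D ≤ 1) :
    UnitBV fun x => h * hi.1.mk ρ (h * x) := by
  have hae : ρ =ᵐ[volume] hi.1.mk ρ := hi.1.ae_eq_mk
  have hm : Measurable (hi.1.mk ρ) := hi.1.stronglyMeasurable_mk.measurable
  have hi' : Integrable (hi.1.mk ρ) := hi.congr hae
  have hi2 : Integrable fun x => h * hi.1.mk ρ (h * x) := (hi'.comp_mul_left' hh.ne').const_mul h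
  refine ⟨by fun_prop, hi2, ?_, ENNReal.ofReal h • D.totalVariation.map (fun x => h⁻¹ * x), ?_, ?_⟩
  · rw [← ofReal_integral_norm_eq_lintegral_enorm hi2, ← ENNReal.ofReal_one]
    congr 1
    have e : ∀ x, ‖h * hi.1.mk ρ (h * x)‖ = h * |hi.1.mk ρ (h * x)| := fun x => by
      rw [norm_mul, Real.norm_of_nonneg hh.le, Real.norm_eq_abs]
    simp_rw [e]
    rw [integral_const_mul, Measure.integral_comp_mul_left (fun x => |hi.1.mk ρ x|) h,
      abs_of_pos (inv_pos.2 hh), smul_eq_mul, mul_inv_cancel_left₀ hh.ne', ← h1]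
    exact integral_congr_ae (hae.mono fun x hx => by simp only [hx])
  · rw [Measure.smul_apply, Measure.map_apply (by fun_prop) MeasurableSet.univ, Set.preimage_univ,
      totalVariation_univ, smul_eq_mul, ← ENNReal.ofReal_mul hh.le]
    exact ENNReal.ofReal_le_one.2 hTV
  · intro ψ hψ hψc
    have hs : HasCompactSupport fun x => ψ (h⁻¹ * x) :=
      hψc.comp_homeomorph (Homeomorph.mulLeft₀ h⁻¹ (inv_ne_zero hh.ne'))
    have h2 := hD (fun x => ψ (h⁻¹ * x)) (hψ.comp (by fun_prop)) hs
    have e : ∫ x, h * hi.1.mk ρ (h * x) * deriv ψ x = h * ∫ x, ρ x * deriv (fun x => ψ (h⁻¹ * x)) x := by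
      have e1 : ∀ x, h * hi.1.mk ρ (h * x) * deriv ψ x =
          h * (fun y => hi.1.mk ρ y * deriv ψ (h⁻¹ * y)) (h * x) := fun x => by
        simp only
        rw [inv_mul_cancel_left₀ hh.ne', mul_assoc]
      simp_rw [e1]
      rw [integral_const_mul, Measure.integral_comp_mul_left
        (fun y => hi.1.mk ρ y * deriv ψ (h⁻¹ * y)) h, abs_of_pos (inv_pos.2 hh), smul_eq_mul,
        ← integral_const_mul]
      congr 1
      refine integral_congr_ae (hae.mono fun x hx => ?_)
      simp only [deriv_comp_mul_left, smul_eq_mul, hx]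
      ring
    rw [e, h2, enorm_mul, enorm_neg, lintegral_smul_measure,
      lintegral_map (hψ.continuous.measurable.enorm) (by fun_prop), Real.enorm_of_nonneg hh.le, smul_eq_mul]
    exact mul_le_mul_right (enorm_sInt_le D) _

/-- The polynomial `x ↦ c · f(h x)`. -/
def dilate {n : ℕ} (c h : ℝ) (f : MvPolynomial (Fin n) ℝ) : MvPolynomial (Fin n) ℝ :=
  ∑ v ∈ f.support, MvPolynomial.monomial v (c * h ^ (∑ i, v i) * f.coeff v)

lemma coeff_dilate {n : ℕ} (c h : ℝ) (f : MvPolynomial (Fin n) ℝ) (v : Fin n →₀ ℕ) :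
    (dilate c h f).coeff v = c * h ^ (∑ i, v i) * f.coeff v := by
  rw [dilate, MvPolynomial.coeff_sum, Finset.sum_eq_single v]
  · simp
  · intro w _ hw
    simp [MvPolynomial.coeff_monomial, hw]
  · intro hv
    rw [MvPolynomial.notMem_support_iff.1 hv]; simp

lemma eval_dilate {n : ℕ} (c h : ℝ) (f : MvPolynomial (Fin n) ℝ) (x : Fin n → ℝ) :
    MvPolynomial.eval x (dilate c h f) = c * MvPolynomial.eval (h • x) f := by
  rw [dilate, map_sum, MvPolynomial.eval_eq', Finset.mul_sum]
  refine Finset.sum_congr rfl fun v _ => ?_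
  rw [MvPolynomial.eval_monomial, Finsupp.prod_fintype _ _ (fun i => pow_zero _)]
  simp_rw [Pi.smul_apply, smul_eq_mul, mul_pow, Finset.prod_mul_distrib]
  rw [Finset.prod_pow_eq_pow_sum]
  ring

lemma exists_leading {n : ℕ} {f : MvPolynomial (Fin n) ℝ}
    (hf : ¬ ∃ c : ℝ, ∀ x : Fin n → ℝ, MvPolynomial.eval x f = c) :
    0 < f.totalDegree ∧ 0 < leadingSup f ∧
      ∃ u : Fin n →₀ ℕ, ∑ i, u i = f.totalDegree ∧ |f.coeff u| = leadingSup f := by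
  have hk : 0 < f.totalDegree := by
    rw [Nat.pos_iff_ne_zero]
    intro h
    refine hf ⟨f.coeff 0, fun x => ?_⟩
    conv_lhs => rw [MvPolynomial.totalDegree_eq_zero_iff_eq_C.1 h]
    simp
  have hne : f.support.Nonempty := by
    rw [Finset.nonempty_iff_ne_empty]
    intro h
    rw [MvPolynomial.support_eq_empty.1 h] at hk
    simp at hk
  have hmem : leadingSup f ∈ {y : ℝ | ∃ u ∈ f.support, (u.sum fun _ e => e) = f.totalDegree ∧
      y = |f.coeff u|} := by
    refine Set.Nonempty.csSup_mem ?_ ?_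
    · obtain ⟨u, hu, h⟩ := Finset.exists_mem_eq_sup f.support hne (fun s => s.sum fun _ e => e)
      exact ⟨_, u, hu, h.symm, rfl⟩
    · refine (f.support.finite_toSet.image fun u => |f.coeff u|).subset ?_
      rintro y ⟨u, hu, -, rfl⟩
      exact ⟨u, hu, rfl⟩
  obtain ⟨u, hu, h1, h2⟩ := hmem
  refine ⟨hk, ?_, u, ?_, h2.symm⟩
  · rw [h2]; exact abs_pos.2 (MvPolynomial.mem_support_iff.1 hu)
  · rw [← h1, Finsupp.sum_fintype _ _ fun _ => rfl]

/-- Undoing the normalization `t = 1`, `K = 1`. -/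
lemma decay_rescale_le {d m k : ℕ} (hm : 0 < m) (hkd : k ≤ d) {K a t c : ℝ} (hK : 1 ≤ K)
    (ha : 0 < a) (ht : 0 < t) (hc : |c| = t⁻¹ * (1 / K) ^ k * a) :
    decay m (d + 2) (k - m) c ≤ (2 * (d + 2)) ^ (d - m) * (K ^ ((d : ℝ) / m) * a ^ (-(1 / (m : ℝ))) *
      t ^ (1 / (m : ℝ)) * (|Real.log (a⁻¹ * t)| ^ (d - m) + 1)) := by
  have hm1 : (1 : ℝ) ≤ m := by exact_mod_cast hm
  have hm0 : (0 : ℝ) < m := by linarith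
  have hK0 : 0 < K := by linarith
  have hc0 : 0 < |c| := by rw [hc]; positivity
  set ℓ := |Real.log (a⁻¹ * t)| with hℓ
  have hℓ0 : 0 ≤ ℓ := abs_nonneg _
  have h1 : Real.exp (-(c.posLog / m)) ≤ K ^ ((d : ℝ) / m) * a ^ (-(1 / (m : ℝ))) * t ^ (1 / (m : ℝ)) := by
    calc Real.exp (-(c.posLog / m)) ≤ Real.exp (-(Real.log |c| / m)) := by
          rw [Real.exp_le_exp, neg_le_neg_iff, Real.log_abs]
          gcongr
          rw [Real.posLog_def]
          exact le_max_right _ _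
      _ = |c| ^ (-(1 / (m : ℝ))) := by
          rw [Real.rpow_def_of_pos hc0]; congr 1; ring
      _ = K ^ ((k : ℝ) / m) * a ^ (-(1 / (m : ℝ))) * t ^ (1 / (m : ℝ)) := by
          rw [hc, Real.mul_rpow (by positivity) ha.le, Real.mul_rpow (by positivity) (by positivity),
            Real.inv_rpow ht.le, one_div K, inv_pow, Real.inv_rpow (by positivity), ← Real.rpow_natCast,
            ← Real.rpow_mul hK0.le, ← Real.rpow_neg ht.le, ← Real.rpow_neg hK0.le, neg_neg]
          rw [show -((k : ℝ) * -(1 / (m : ℝ))) = k / m by ring]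
          ring
      _ ≤ _ := by
          gcongr
  have h2 : c.posLog / m ≤ ℓ := by
    have h3 : c.posLog ≤ ℓ := by
      rw [← Real.posLog_abs]
      have : |c| ≤ a / t := by
        rw [hc, one_div, inv_pow]
        have : (K ^ k)⁻¹ ≤ 1 := inv_le_one_of_one_le₀ (one_le_pow₀ hK)
        calc _ ≤ t⁻¹ * 1 * a := by gcongr
          _ = a / t := by ring
      refine (Real.posLog_le_posLog hc0.le this).trans ?_
      rw [hℓ, show a⁻¹ * t = (a / t)⁻¹ by rw [inv_div]; ring, Real.log_inv, abs_neg]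
      exact max_le (abs_nonneg _) (le_abs_self _)
    calc c.posLog / m ≤ c.posLog := div_le_self Real.posLog_nonneg hm1
      _ ≤ ℓ := h3
  have hd0 : (0 : ℝ) ≤ d := Nat.cast_nonneg d
  have h4 : ((d : ℝ) + 2 + c.posLog / m) ^ (k - m) ≤ (2 * (d + 2)) ^ (d - m) * (ℓ ^ (d - m) + 1) := by
    have hp := posLog_div_nonneg m c
    calc ((d : ℝ) + 2 + c.posLog / m) ^ (k - m) ≤ ((d : ℝ) + 2 + c.posLog / m) ^ (d - m) :=
          pow_le_pow_right₀ (by linarith) (by omega)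
      _ ≤ (2 * ((d : ℝ) + 2) * max ℓ 1) ^ (d - m) := by
          gcongr
          nlinarith [le_max_left ℓ 1, le_max_right ℓ 1]
      _ = (2 * ((d : ℝ) + 2)) ^ (d - m) * max ℓ 1 ^ (d - m) := mul_pow _ _ _
      _ ≤ _ := by
          gcongr
          rcases max_choice ℓ 1 with h | h <;> rw [h]
          · linarith
          · rw [one_pow]; linarith [pow_nonneg hℓ0 (d - m)]
  rw [decay]
  have hp := posLog_div_nonneg m c
  calc _ ≤ (K ^ ((d : ℝ) / m) * a ^ (-(1 / (m : ℝ))) * t ^ (1 / (m : ℝ))) *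
        ((2 * (d + 2)) ^ (d - m) * (ℓ ^ (d - m) + 1)) := by gcongr
    _ = _ := by ring

/-- **Key product estimate (individual degree version).**  For `d ≥ m` there exists
a constant `C(m,d)` such that for any functions `ρ₁, …, ρ_n : ℝ → ℝ` of bounded
variation (with distributional derivatives `D₁ρ_j`) normalized by `‖ρ_j‖_{L¹} = 1`,
any non-constant polynomial `f ∈ 𝒫_{d,m}(ℝⁿ)`, any `t > 0` and any `φ ∈ C_b^∞(ℝ)`
with `‖φ'‖_∞ ≤ 1` and `‖φ‖_∞ ≤ t`,
`∫ φ'(f(x)) ρ₁(x₁)⋯ρ_n(x_n) dx ≤ C(m,d) (1 + max_j ‖D₁ρ_j‖_{TV})^{d/m}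
  [f]_∞^{-1/m} t^{1/m} (|ln([f]_∞⁻¹ t)|^{d-m} + 1)`. -/
theorem product_key_individual (d m : ℕ) (hm : 0 < m) (hdm : m ≤ d) :
    ∃ C : ℝ, 0 < C ∧ ∀ (n : ℕ), 0 < n →
      ∀ (ρ : Fin n → ℝ → ℝ) (Dρ : Fin n → SignedMeasure ℝ),
        (∀ j, Integrable (ρ j)) →
        (∀ j, (∫ x, |ρ j x|) = 1) →
        (∀ j, ∀ ψ : ℝ → ℝ, ContDiff ℝ (⊤ : ℕ∞) ψ → HasCompactSupport ψ →
          (∫ x, ρ j x * deriv ψ x) = - sInt (Dρ j) ψ) →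
      ∀ f : MvPolynomial (Fin n) ℝ, f.totalDegree ≤ d →
        (∀ u ∈ f.support, ∀ i, u i ≤ m) →
        (¬ ∃ c : ℝ, ∀ x : Fin n → ℝ, MvPolynomial.eval x f = c) →
      ∀ t : ℝ, 0 < t →
      ∀ φ : ℝ → ℝ, CbSmooth φ → (∀ x, |deriv φ x| ≤ 1) → (∀ x, |φ x| ≤ t) →
        (∫ x : Fin n → ℝ, deriv φ (MvPolynomial.eval x f) * ∏ j, ρ j (x j)) ≤
          C * (1 + ⨆ j, sTV (Dρ j)) ^ ((d : ℝ) / (m : ℝ)) *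
            leadingSup f ^ (-(1 / (m : ℝ))) * t ^ (1 / (m : ℝ)) *
            (|Real.log ((leadingSup f)⁻¹ * t)| ^ (d - m) + 1) := by
  obtain ⟨Q, A, hQ, hA, hosc⟩ := exists_oscillatory_pi hm
  refine ⟨A * Q ^ d * (2 * (d + 2)) ^ (d - m), by positivity,
    fun n hn ρ Dρ hρi hρ1 hD f hfd hfm hfc t ht φ hφ hφ' hφt => ?_⟩
  obtain ⟨hk, ha, u, hu, hua⟩ := exists_leading hfc
  set k := f.totalDegree
  set a := leadingSup f
  set K : ℝ := 1 + ⨆ j, sTV (Dρ j) with hK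
  have hTVK : ∀ j, sTV (Dρ j) ≤ K := fun j => by
    have := le_ciSup (Finite.bddAbove_range fun j => sTV (Dρ j)) j
    linarith
  have hK1 : 1 ≤ K := by
    have : 0 ≤ ⨆ j, sTV (Dρ j) := Real.iSup_nonneg fun j => ENNReal.toReal_nonneg
    linarith
  have hK0 : 0 < K := by linarith
  set h : ℝ := 1 / K with hh
  have hh0 : 0 < h := by positivity
  have hU : ∀ j, UnitBV fun x => h * (hρi j).1.mk (ρ j) (h * x) := fun j =>
    unitBV_dilate (hρi j) (hρ1 j) (hD j) hh0 (by
      rw [hh, one_div, inv_mul_le_iff₀ hK0, mul_one]; exact hTVK j)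
  -- the test function `z ↦ φ(t z) / t`, which corresponds to `t = 1`
  have hφd : ∀ z, deriv (fun z => t⁻¹ * φ (t * z)) z = deriv φ (t * z) := fun z => by
    rw [deriv_const_mul_field, deriv_comp_mul_left, smul_eq_mul, inv_mul_cancel_left₀ ht.ne']
  have hadm : Adm m k (dilate t⁻¹ h f) := by
    intro v hv
    rw [coeff_dilate] at hv
    have hv' := MvPolynomial.mem_support_iff.2 (right_ne_zero_of_mul hv)
    refine ⟨hfm v hv', ?_⟩
    have := MvPolynomial.le_totalDegree hv'
    rwa [Finsupp.sum_fintype _ _ fun _ => rfl] at this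
  have hkd2 : (k : ℝ) ≤ d + 2 := by
    have : (k : ℝ) ≤ d := by exact_mod_cast hfd
    linarith
  have key := hosc (B := d + 2) (by linarith [Nat.cast_nonneg (α := ℝ) d])
    (φ := fun z => t⁻¹ * φ (t * z)) (contDiff_const.mul (hφ.1.comp (by fun_prop)))
    (fun z => by rw [hφd]; exact hφ' _)
    (fun z => by
      rw [abs_mul, abs_of_pos (inv_pos.2 ht), inv_mul_le_iff₀ ht, mul_one]; exact hφt _)
    n k hk hkd2 _ hU _ hadm u hu
  have hint : ∫ x : Fin n → ℝ, deriv φ (MvPolynomial.eval x f) * ∏ j, ρ j (x j) =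
      ∫ x : Fin n → ℝ, deriv (fun z => t⁻¹ * φ (t * z)) (MvPolynomial.eval x (dilate t⁻¹ h f)) *
        ∏ j, (h * (hρi j).1.mk (ρ j) (h * x j)) := by
    have hae : ∀ᵐ x : Fin n → ℝ, ∀ j, ρ j (x j) = (hρi j).1.mk (ρ j) (x j) :=
      ae_all_iff.2 fun j =>
        (Measure.quasiMeasurePreserving_eval (fun _ : Fin n => (volume : Measure ℝ)) j).ae (hρi j).1.ae_eq_mk
    have e : ∀ x : Fin n → ℝ,
        deriv (fun z => t⁻¹ * φ (t * z)) (MvPolynomial.eval x (dilate t⁻¹ h f)) *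
          ∏ j, (h * (hρi j).1.mk (ρ j) (h * x j)) =
        h ^ n * (fun y : Fin n → ℝ => deriv φ (MvPolynomial.eval y f) * ∏ j, (hρi j).1.mk (ρ j) (y j))
          (h • x) := by
      intro x
      rw [hφd, eval_dilate, mul_inv_cancel_left₀ ht.ne', Finset.prod_mul_distrib]
      simp only [Finset.prod_const, Finset.card_univ, Fintype.card_fin, Pi.smul_apply, smul_eq_mul]
      ring
    simp_rw [e]
    rw [integral_const_mul, Measure.integral_comp_smul volume
      (fun y : Fin n → ℝ => deriv φ (MvPolynomial.eval y f) * ∏ j, (hρi j).1.mk (ρ j) (y j)) h,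
      Module.finrank_fin_fun, abs_of_pos (by positivity), smul_eq_mul,
      mul_inv_cancel_left₀ (pow_pos hh0 n).ne']
    refine integral_congr_ae (hae.mono fun x hx => ?_)
    simp only [hx]
  rw [hint]
  have hfin : |(dilate t⁻¹ h f).coeff u| = t⁻¹ * (1 / K) ^ k * a := by
    rw [coeff_dilate, hu, abs_mul, hua, abs_of_pos (by positivity)]
  have hd0 := decay_nonneg (m := m) (B := (d : ℝ) + 2) (by positivity) (k - m) ((dilate t⁻¹ h f).coeff u)
  rw [Real.enorm_eq_ofReal_abs, ENNReal.ofReal_le_ofReal_iff (by positivity)] at key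
  calc _ ≤ _ := le_abs_self _
    _ ≤ _ := key
    _ ≤ A * Q ^ d * ((2 * (d + 2)) ^ (d - m) * (K ^ ((d : ℝ) / m) * a ^ (-(1 / (m : ℝ))) *
      t ^ (1 / (m : ℝ)) * (|Real.log (a⁻¹ * t)| ^ (d - m) + 1))) := by
        gcongr
        exact decay_rescale_le hm hfd hK1 ha ht hfin
    _ = _ := by ring
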